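/- Suppose ν satisfies the Carleman condition and F(x) ∈ S[x]^p is positive semidefinite on X = {x : G(x,y) ⪰ 0 ∀ y ∈ Y}. Then for every ε > 0 there exist N_ε ∈ ℕ and SOS matrices Σ₀ ∈ S[x]^p, Σ ∈ S[x,y]^{pq}, with deg Σ₀ ≤ 2(N_ε + d_F) and deg_x Σ ≤ 2(N_ε + d_F − d_G), such that θ^{N_ε}(F(x) + ε θ^{d_F} I_p) = Σ₀(x) + ∫_Y ⟨Σ(x,y), G(x,y)⟩_p dν(y), where θ = 1 + ‖x‖². -/

import Mathlib

open MeasureTheory MvPolynomial Matrix Finset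

noncomputable section

/-- A polynomial matrix is an SOS matrix if it factors as `Tᵀ * T`. -/
def IsSOSMatrix {σ : Type*} {ι : Type*} [Fintype ι]
    (M : Matrix ι ι (MvPolynomial σ ℝ)) : Prop :=
  ∃ (l : ℕ) (T : Matrix (Fin l) ι (MvPolynomial σ ℝ)), M = Tᵀ * T

/-- A polynomial is a sum of squares. -/
def IsSOSPoly {σ : Type*} (f : MvPolynomial σ ℝ) : Prop :=
  ∃ (l : ℕ) (g : Fin l → MvPolynomial σ ℝ), f = ∑ i, (g i) ^ 2

/-- The block-trace bilinear map `⟨A,B⟩_p = Tr_p (Aᵀ (I_p ⊗ B))`. -/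
def lram {R : Type*} [CommSemiring R] {ιp ιq : Type*} [Fintype ιq]
    (A : Matrix (ιp × ιq) (ιp × ιq) R) (B : Matrix ιq ιq R) :
    Matrix ιp ιp R :=
  Matrix.of fun i j => ∑ a : ιq, ∑ c : ιq, A (j, c) (i, a) * B c a

/-- The `x`-part of an exponent in the variables `x ⊕ y`. -/
def xPart {n m : ℕ} (d : (Fin n ⊕ Fin m) →₀ ℕ) : Fin n →₀ ℕ :=
  Finsupp.comapDomain Sum.inl d Sum.inl_injective.injOn

/-- Integrate out the `y`-variables of a polynomial in `(x, y)` against the measure `ν`: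
`∫_Y Σ_β H_β(x) y^β dν := Σ_β H_β(x) ∫_Y y^β dν`. -/
def integY {n m : ℕ} (ν : Measure (Fin m → ℝ))
    (q : MvPolynomial (Fin n ⊕ Fin m) ℝ) : MvPolynomial (Fin n) ℝ :=
  ∑ d ∈ q.support, MvPolynomial.monomial (xPart d)
    (q.coeff d * ∫ y, ∏ j : Fin m, (y j) ^ (d (Sum.inr j)) ∂ν)

/-- All polynomial moments of `ν` are finite. -/
def momentsFinite {m : ℕ} (ν : Measure (Fin m → ℝ)) : Prop :=
  ∀ h : MvPolynomial (Fin m) ℝ, Integrable (fun y => |MvPolynomial.eval y h|) ν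

/-- `ν` has support exactly `Y`. -/
def hasSupport {m : ℕ} (ν : Measure (Fin m → ℝ)) (Y : Set (Fin m → ℝ)) : Prop :=
  ν Yᶜ = 0 ∧ ∀ U : Set (Fin m → ℝ), IsOpen U → (U ∩ Y).Nonempty → 0 < ν U

/-- The multivariate Carleman condition on `ν`. -/
def Carleman {m : ℕ} (ν : Measure (Fin m → ℝ)) : Prop :=
  ∀ j : Fin m, ¬ Summable (fun d : ℕ =>
    (∫ y, (y j) ^ (2 * (d + 1)) ∂ν) ^ (-(1 : ℝ) / (2 * (d + 1))))

/-- Evaluate a polynomial matrix at a point. -/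
def evalMat {σ : Type*} {ι : Type*} (x : σ → ℝ)
    (M : Matrix ι ι (MvPolynomial σ ℝ)) : Matrix ι ι ℝ :=
  M.map (MvPolynomial.eval x)

/-- The spectral (L²-operator) norm of a real matrix. -/
def specNorm {ι : Type*} [Fintype ι] [DecidableEq ι] (A : Matrix ι ι ℝ) : ℝ :=
  ‖(Matrix.toEuclideanLin A).toContinuousLinearMap‖

/-- Degree of a polynomial matrix. -/
def matDeg {ι σ : Type*} [Fintype ι] (M : Matrix ι ι (MvPolynomial σ ℝ)) : ℕ :=
  Finset.univ.sup fun i => Finset.univ.sup fun j => (M i j).totalDegree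

/-- Degree in `x` of a polynomial in `(x,y)`. -/
def degX {n m : ℕ} (q : MvPolynomial (Fin n ⊕ Fin m) ℝ) : ℕ :=
  q.support.sup fun d => ∑ i : Fin n, d (Sum.inl i)

/-- Degree in `y` of a polynomial in `(x,y)`. -/
def degY {n m : ℕ} (q : MvPolynomial (Fin n ⊕ Fin m) ℝ) : ℕ :=
  q.support.sup fun d => ∑ j : Fin m, d (Sum.inr j)

def matDegX {ι : Type*} {n m : ℕ} [Fintype ι]
    (M : Matrix ι ι (MvPolynomial (Fin n ⊕ Fin m) ℝ)) : ℕ :=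
  Finset.univ.sup fun i => Finset.univ.sup fun j => degX (M i j)

def matDegY {ι : Type*} {n m : ℕ} [Fintype ι]
    (M : Matrix ι ι (MvPolynomial (Fin n ⊕ Fin m) ℝ)) : ℕ :=
  Finset.univ.sup fun i => Finset.univ.sup fun j => degY (M i j)

/-- Homogeneity in `x` of a polynomial in `(x,y)`. -/
def IsHomogeneousX {n m : ℕ} (q : MvPolynomial (Fin n ⊕ Fin m) ℝ) (k : ℕ) : Prop :=
  ∀ d ∈ q.support, ∑ i : Fin n, d (Sum.inl i) = k

/-- Positive semidefiniteness of the full (infinite) moment matrix `M(S)`: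
every finite principal block submatrix is PSD. -/
def MomentPSD {n p : ℕ} (S : (Fin n →₀ ℕ) → Matrix (Fin p) (Fin p) ℝ) : Prop :=
  ∀ (N : ℕ) (idx : Fin N → (Fin n →₀ ℕ)),
    (Matrix.of fun a b : Fin N × Fin p => S (idx a.1 + idx b.1) a.2 b.2).PosSemidef

/-- Exponents of degree at most `d` in `n` variables. -/
def Expo (n d : ℕ) := {a : Fin n → Fin (d + 1) // ∑ i, (a i : ℕ) ≤ d}

instance (n d : ℕ) : Fintype (Expo n d) := by unfold Expo; infer_instance
instance (n d : ℕ) : DecidableEq (Expo n d) := by unfold Expo; infer_instance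

def expF {n d : ℕ} (a : Fin n → Fin (d + 1)) : Fin n →₀ ℕ :=
  Finsupp.equivFunOnFinite.symm (fun i => (a i : ℕ))

/-- Truncated moment matrix `M_d(S)`. -/
def momentMat {n p : ℕ} (S : (Fin n →₀ ℕ) → Matrix (Fin p) (Fin p) ℝ) (d : ℕ) :
    Matrix (Expo n d × Fin p) (Expo n d × Fin p) ℝ :=
  Matrix.of fun a b => S (expF a.1.1 + expF b.1.1) a.2 b.2

/-- Truncated localizing matrix `M^ν_{d,k}(G S)`. -/
def locMat {n m p q : ℕ} (ν : Measure (Fin m → ℝ))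
    (G : Matrix (Fin q) (Fin q) (MvPolynomial (Fin n ⊕ Fin m) ℝ))
    (S : (Fin n →₀ ℕ) → Matrix (Fin p) (Fin p) ℝ) (d k : ℕ) :
    Matrix ((Expo n d × Expo m k) × (Fin p × Fin q))
           ((Expo n d × Expo m k) × (Fin p × Fin q)) ℝ :=
  Matrix.of fun r c =>
    ∑ e ∈ (G r.2.2 c.2.2).support,
      (∫ y, ∏ j : Fin m, (y j) ^ (e (Sum.inr j) + (r.1.2.1 j : ℕ) + (c.1.2.1 j : ℕ)) ∂ν) *
      ((G r.2.2 c.2.2).coeff e *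
        S (expF r.1.1.1 + expF c.1.1.1 + xPart e) r.2.1 c.2.1)

/-- The Riesz functional `L_S(H) = Σ_α tr(H_α S_α)`. -/
def RieszL {n p : ℕ} (S : (Fin n →₀ ℕ) → Matrix (Fin p) (Fin p) ℝ)
    (H : Matrix (Fin p) (Fin p) (MvPolynomial (Fin n) ℝ)) : ℝ :=
  ∑ i, ∑ j, ∑ α ∈ (H i j).support, (H i j).coeff α * S α j i

end

/-!
Let `A` be the algebra of the bounded rational functions `P / θ ^ k` with `deg P ≤ 2 k`. The
matrices over `A` of the form `S + ∫ ⟨T, G⟩ dν` with SOS matrices `S` and `T` form a quadratic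
module. As `θ ^ k` is the sum of the squares of all words of length `k` in the letters `1` and
`X i`, every element of `A` is bounded by a constant modulo sums of squares, so that the identity
matrix is an order unit of this quadratic module. If `F / θ ^ d + ε` is not in the quadratic module,
Krein–Milman provides an extreme state that separates it, and an extreme state is of the form
`M ↦ L (M.map χ)` for a character `χ` of `A` and a state `L` of the real matrices. Hence it suffices
to show that `χ` maps `F / θ ^ d` to a positive semidefinite matrix.

If `χ (1 / θ) = 0`, then `χ` is a point at infinity and kills `F / θ ^ d`, because `deg F < 2 d`.
Otherwise `χ` is the evaluation at a point `z`, and `∫ h(y)² uᵀ G(z, y) u dν(y) ≥ 0` for all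
polynomials `h` and vectors `u`. Under the Carleman condition, polynomials are dense in `L²` by the
Denjoy–Carleman theorem on quasi-analytic functions, applied to Fourier transforms. So `G(z, y)` is
positive semidefinite on the support of `ν`, and therefore so is `F(z)`.
-/

/-! ### Quasi-analyticity -/

/-- A sequence of positive reals that is logarithmically convex: `k ↦ log M k` is convex. -/
structure IsLogConvexSeq (M : ℕ → ℝ) : Prop where
  pos : ∀ k, 0 < M k
  sq_le : ∀ k, M (k + 1) ^ 2 ≤ M k * M (k + 2)

/-- A log-convex sequence satisfying Denjoy's divergence condition. By the Denjoy–Carleman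
theorem, a smooth function whose `k`-th derivative is bounded by `M k` is then determined by its
Taylor coefficients at one point. -/
structure IsQuasiAnalyticWeight (M : ℕ → ℝ) : Prop extends IsLogConvexSeq M where
  not_summable_ratio : ¬ Summable fun k => M k / M (k + 1)

namespace IsLogConvexSeq

variable {M : ℕ → ℝ} (hM : IsLogConvexSeq M)

include hM

theorem ratio_pos (k : ℕ) : 0 < M k / M (k + 1) :=
  div_pos (hM.pos _) (hM.pos _)

theorem antitone_ratio : Antitone fun k => M k / M (k + 1) := by
  refine antitone_nat_of_succ_le fun k => ?_
  rw [div_le_div_iff₀ (hM.pos _) (hM.pos _)]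
  nlinarith [hM.sq_le k]

theorem le_mul_pow {N j i : ℕ} (h : j + i ≤ N + 1) :
    M (j + i) ≤ M j * (M (N + 1) / M N) ^ i := by
  induction i with
  | zero => simp
  | succ i ih =>
    have hratio : M (j + i + 1) / M (j + i) ≤ M (N + 1) / M N := by
      rw [← inv_div, ← inv_div (M N)]
      exact inv_anti₀ (hM.ratio_pos _) (hM.antitone_ratio (show j + i ≤ N by omega))
    rw [div_le_iff₀ (hM.pos _)] at hratio
    calc M (j + (i + 1)) ≤ M (N + 1) / M N * M (j + i) := hratio
      _ ≤ M (N + 1) / M N * (M j * (M (N + 1) / M N) ^ i) :=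
          mul_le_mul_of_nonneg_left (ih (by omega)) (div_pos (hM.pos _) (hM.pos _)).le
      _ = M j * (M (N + 1) / M N) ^ (i + 1) := by ring

theorem const_mul {c : ℝ} (hc : 0 < c) : IsLogConvexSeq fun k => c * M k where
  pos k := mul_pos hc (hM.pos k)
  sq_le k := by nlinarith [mul_le_mul_of_nonneg_left (hM.sq_le k) (sq_nonneg c)]

theorem sqrt : IsLogConvexSeq fun k => √(M k) where
  pos k := Real.sqrt_pos.2 (hM.pos k)
  sq_le k := by
    rw [Real.sq_sqrt (hM.pos _).le, ← Real.sqrt_mul (hM.pos k).le]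
    exact Real.le_sqrt_of_sq_le (hM.sq_le k)

theorem even : IsLogConvexSeq fun k => M (2 * k) where
  pos k := hM.pos _
  sq_le k := by
    have hratio : M (2 * k + 2) / M (2 * k + 4) ≤ M (2 * k) / M (2 * k + 2) := by
      rw [← div_mul_div_cancel₀ (hM.pos (2 * k + 3)).ne',
        ← div_mul_div_cancel₀ (a := M (2 * k)) (hM.pos (2 * k + 1)).ne']
      exact mul_le_mul (hM.antitone_ratio (by omega)) (hM.antitone_ratio (by omega))
        (hM.ratio_pos _).le (hM.ratio_pos _).le
    rw [div_le_div_iff₀ (hM.pos _) (hM.pos _)] at hratio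
    rw [sq]
    exact hratio

end IsLogConvexSeq

namespace IsQuasiAnalyticWeight

variable {M : ℕ → ℝ} (hM : IsQuasiAnalyticWeight M)

include hM

theorem const_mul {c : ℝ} (hc : 0 < c) : IsQuasiAnalyticWeight fun k => c * M k where
  toIsLogConvexSeq := hM.toIsLogConvexSeq.const_mul hc
  not_summable_ratio := by
    simpa only [mul_div_mul_left _ _ hc.ne'] using hM.not_summable_ratio

theorem sqrt_even : IsQuasiAnalyticWeight fun k => √(M (2 * k)) where
  toIsLogConvexSeq := hM.even.sqrt
  not_summable_ratio hsum := by
    have hle (k : ℕ) : M (2 * k + 1) / M (2 * k + 2) ≤ √(M (2 * k)) / √(M (2 * (k + 1))) := by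
      rw [← Real.sqrt_div (hM.pos _).le, mul_add_one,
        ← div_mul_div_cancel₀ (a := M (2 * k)) (hM.pos (2 * k + 1)).ne']
      refine Real.le_sqrt_of_sq_le ?_
      rw [sq]
      exact mul_le_mul_of_nonneg_right (hM.antitone_ratio (Nat.le_succ _)) (hM.ratio_pos _).le
    have hodd : Summable fun k => M (2 * k + 1) / M (2 * k + 2) :=
      hsum.of_nonneg_of_le (fun k => (hM.ratio_pos _).le) hle
    have hsucc_even : Summable fun k => M (2 * k + 2) / M (2 * k + 3) :=
      hodd.of_nonneg_of_le (fun k => (hM.ratio_pos _).le)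
        fun k => hM.antitone_ratio (show 2 * k + 1 ≤ 2 * k + 2 by omega)
    refine hM.not_summable_ratio ((summable_nat_add_iff 1).1 ?_)
    exact hodd.even_add_odd hsucc_even

end IsQuasiAnalyticWeight

section DenjoyCarleman

variable {E : Type*} [NormedAddCommGroup E] [NormedSpace ℝ E]

theorem hasDerivAt_sum_mul_pow_div_factorial (A : ℕ → ℝ) (n : ℕ) (t : ℝ) :
    HasDerivAt (fun t : ℝ => ∑ i ∈ range (n + 1), A i * (t ^ i / i.factorial))
      (∑ i ∈ range n, A (i + 1) * (t ^ i / i.factorial)) t := by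
  have hderiv : HasDerivAt (fun t : ℝ => ∑ i ∈ range (n + 1), A i * (t ^ i / i.factorial))
      (∑ i ∈ range (n + 1), A i * ((i : ℝ) * t ^ (i - 1) / i.factorial)) t :=
    HasDerivAt.fun_sum fun i _ => ((hasDerivAt_pow i t).div_const _).const_mul _
  refine hderiv.congr_deriv ?_
  rw [Finset.sum_range_succ']
  simp only [Nat.cast_zero, zero_mul, zero_div, mul_zero, add_zero]
  refine Finset.sum_congr rfl fun i _ => ?_
  rw [Nat.factorial_succ]
  push_cast
  field_simp

theorem norm_le_sum_mul_pow_div_factorial {n : ℕ} {f : ℕ → ℝ → E} {A : ℕ → ℝ} {x : ℝ}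
    (hf : ∀ k y, HasDerivAt (f k) (f (k + 1) y) y) (hA : ∀ i < n, ‖f i x‖ ≤ A i)
    (hn : ∀ y, ‖f n y‖ ≤ A n) {h : ℝ} (hh : 0 ≤ h) :
    ‖f 0 (x + h)‖ ≤ ∑ i ∈ range (n + 1), A i * (h ^ i / i.factorial) := by
  induction n generalizing f A h with
  | zero => simpa using hn (x + h)
  | succ n ih =>
    have hderiv (t : ℝ) : HasDerivAt (fun t => f 0 (x + t)) (f 1 (x + t)) t :=
      (hf 0 (x + t)).comp_const_add x t
    have hbound (t : ℝ) (ht : 0 ≤ t) :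
        ‖f 1 (x + t)‖ ≤ ∑ i ∈ range (n + 1), A (i + 1) * (t ^ i / i.factorial) :=
      ih (f := fun k => f (k + 1)) (fun k => hf (k + 1)) (fun i hi => hA (i + 1) (by omega)) hn ht
    refine image_norm_le_of_norm_deriv_right_le_deriv_boundary (a := 0) (b := h)
      (fun t _ => (hderiv t).continuousAt.continuousWithinAt)
      (fun t _ => (hderiv t).hasDerivWithinAt) ?_
      (hasDerivAt_sum_mul_pow_div_factorial A (n + 1)) (fun t ht => hbound t ht.1)
      (Set.right_mem_Icc.2 hh)
    rw [Finset.sum_range_succ']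
    simpa using hA 0 (by omega)

theorem sum_mul_pow_div_factorial_le_exp {a h : ℝ} (ha : 0 < a) (hh : 0 ≤ h)
    (hle : h ≤ a / Real.exp 1) (n : ℕ) :
    ∑ i ∈ range n, (Real.exp 1 * a⁻¹ * h) ^ i / i.factorial ≤ Real.exp 1 := by
  refine (Real.sum_le_exp_of_nonneg (by positivity) n).trans (Real.exp_le_exp.2 ?_)
  calc Real.exp 1 * a⁻¹ * h ≤ Real.exp 1 * a⁻¹ * (a / Real.exp 1) := by gcongr
    _ = 1 := by field_simp

variable {f : ℕ → ℝ → E} {M : ℕ → ℝ}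

/-- `f j x` is at most `M j` times `exp (j - N)`, for all `j < N`: in Bang's proof of the
Denjoy–Carleman theorem, `N` measures the flatness of the function `f 0` at `x`. -/
def IsFlatAt (f : ℕ → ℝ → E) (M : ℕ → ℝ) (N : ℕ) (x : ℝ) : Prop :=
  ∀ j < N, ‖f j x‖ ≤ Real.exp ((j : ℝ) - N) * M j

namespace IsFlatAt

-- Moving by `M N / (e M (N + 1))` costs one order of flatness.
theorem add_of_le_ratio (hf : ∀ k y, HasDerivAt (f k) (f (k + 1) y) y) (hM : IsLogConvexSeq M)
    (hb : ∀ k y, ‖f k y‖ ≤ M k) {N : ℕ} {x h : ℝ} (hx : IsFlatAt f M (N + 1) x) (hh : 0 ≤ h)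
    (hhN : h ≤ M N / M (N + 1) / Real.exp 1) : IsFlatAt f M N (x + h) := by
  intro j hj
  set c := Real.exp ((j : ℝ) - (N + 1 : ℕ)) * M j with hc
  have hc0 : 0 < c := mul_pos (Real.exp_pos _) (hM.pos j)
  have hterm : ∀ i ∈ range (N + 1 - j + 1),
      Real.exp (((j + i : ℕ) : ℝ) - (N + 1 : ℕ)) * M (j + i) * (h ^ i / i.factorial) ≤
        c * ((Real.exp 1 * (M N / M (N + 1))⁻¹ * h) ^ i / i.factorial) := by
    intro i hi
    have hexp : Real.exp (((j + i : ℕ) : ℝ) - (N + 1 : ℕ)) =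
        Real.exp ((j : ℝ) - (N + 1 : ℕ)) * Real.exp 1 ^ i := by
      rw [← Real.exp_nat_mul, ← Real.exp_add]
      congr 1; push_cast; ring
    have hle := hM.le_mul_pow (show j + i ≤ N + 1 by have := Finset.mem_range.1 hi; omega)
    rw [hexp]
    calc _ ≤ Real.exp ((j : ℝ) - (N + 1 : ℕ)) * Real.exp 1 ^ i *
          (M j * (M (N + 1) / M N) ^ i) * (h ^ i / i.factorial) := by gcongr
      _ = _ := by rw [hc, inv_div, mul_pow, mul_pow]; ring
  calc ‖f j (x + h)‖ ≤ ∑ i ∈ range (N + 1 - j + 1),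
          Real.exp (((j + i : ℕ) : ℝ) - (N + 1 : ℕ)) * M (j + i) * (h ^ i / i.factorial) :=
        norm_le_sum_mul_pow_div_factorial (f := fun k => f (j + k)) (fun k => hf (j + k))
          (fun i hi => hx (j + i) (by omega))
          (fun y => by simpa [show j + (N + 1 - j) = N + 1 by omega] using hb (N + 1) y) hh
    _ ≤ c * ∑ i ∈ range (N + 1 - j + 1),
          (Real.exp 1 * (M N / M (N + 1))⁻¹ * h) ^ i / i.factorial := by
        rw [Finset.mul_sum]
        exact Finset.sum_le_sum hterm
    _ ≤ c * Real.exp 1 := by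
        gcongr
        exact sum_mul_pow_div_factorial_le_exp (hM.ratio_pos N) hh hhN _
    _ = Real.exp ((j : ℝ) - N) * M j := by
        rw [hc, mul_right_comm, ← Real.exp_add]
        congr 2; push_cast; ring

theorem add_of_le_sum (hf : ∀ k y, HasDerivAt (f k) (f (k + 1) y) y) (hM : IsLogConvexSeq M)
    (hb : ∀ k y, ‖f k y‖ ≤ M k) {K d : ℕ} {x h : ℝ} (hx : IsFlatAt f M (K + d) x) (hh : 0 ≤ h)
    (hle : h ≤ ∑ k ∈ range d, M (K + k) / M (K + k + 1) / Real.exp 1) :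
    IsFlatAt f M K (x + h) := by
  induction d generalizing x h with
  | zero =>
    have : h = 0 := le_antisymm (by simpa using hle) hh
    simpa [this] using hx
  | succ d ih =>
    rw [Finset.sum_range_succ] at hle
    set c := M (K + d) / M (K + d + 1) / Real.exp 1
    have hpos (k : ℕ) : 0 < M (K + k) / M (K + k + 1) / Real.exp 1 :=
      div_pos (hM.ratio_pos _) (Real.exp_pos 1)
    have hx' : IsFlatAt f M (K + d) (x + min h c) :=
      hx.add_of_le_ratio hf hM hb (le_min hh (hpos d).le) (min_le_right _ _)
    have hrest : h - min h c ≤ ∑ k ∈ range d, M (K + k) / M (K + k + 1) / Real.exp 1 := by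
      have := Finset.sum_nonneg fun k (_ : k ∈ range d) => (hpos k).le
      rcases min_choice h c with h' | h' <;> rw [h'] <;> linarith
    simpa [add_assoc] using ih hx' (by simp) hrest

end IsFlatAt

namespace IsQuasiAnalyticWeight

theorem eq_zero_of_flat_of_nonneg (hM : IsQuasiAnalyticWeight M)
    (hf : ∀ k y, HasDerivAt (f k) (f (k + 1) y) y) (hb : ∀ k y, ‖f k y‖ ≤ M k)
    (h0 : ∀ k, f k 0 = 0) {x : ℝ} (hx : 0 ≤ x) : f 0 x = 0 := by
  have hdiv (K : ℕ) : ¬ Summable fun k => M (K + k) / M (K + k + 1) / Real.exp 1 := by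
    simp only [add_comm K]
    rw [summable_div_const_iff (Real.exp_pos 1).ne']
    exact fun hs => hM.not_summable_ratio ((summable_nat_add_iff K).1 hs)
  have hK (K : ℕ) : ‖f 0 x‖ ≤ Real.exp (-((K + 1 : ℕ) : ℝ)) * M 0 := by
    obtain ⟨d, hd⟩ := (((not_summable_iff_tendsto_nat_atTop_of_nonneg fun k =>
      (div_pos (hM.ratio_pos _) (Real.exp_pos 1)).le).1 (hdiv (K + 1))).eventually_ge_atTop
        x).exists
    have hflat : IsFlatAt f M (K + 1 + d) 0 := fun j _ => by
      simpa [h0 j] using mul_nonneg (Real.exp_pos _).le (hM.pos j).le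
    simpa using hflat.add_of_le_sum hf hM.toIsLogConvexSeq hb hx hd 0 (by omega)
  have hlim : Filter.Tendsto (fun K : ℕ => Real.exp (-((K + 1 : ℕ) : ℝ)) * M 0) Filter.atTop
      (nhds 0) := by
    simpa using (Real.tendsto_exp_neg_atTop_nhds_zero.comp (tendsto_natCast_atTop_atTop.comp
      (Filter.tendsto_add_atTop_nat 1))).mul_const (M 0)
  exact norm_le_zero_iff.1 (ge_of_tendsto' hlim hK)

theorem eq_zero_of_flat (hM : IsQuasiAnalyticWeight M)
    (hf : ∀ k y, HasDerivAt (f k) (f (k + 1) y) y) (hb : ∀ k y, ‖f k y‖ ≤ M k)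
    (h0 : ∀ k, f k 0 = 0) (x : ℝ) : f 0 x = 0 := by
  rcases le_total 0 x with hx | hx
  · exact hM.eq_zero_of_flat_of_nonneg hf hb h0 hx
  · have hderiv (k : ℕ) (y : ℝ) : HasDerivAt (fun y => (-1 : ℝ) ^ k • f k (-y))
        ((-1 : ℝ) ^ (k + 1) • f (k + 1) (-y)) y := by
      rw [pow_succ, mul_smul]
      exact ((hf k (-y)).scomp y (hasDerivAt_neg y)).const_smul _
    simpa using hM.eq_zero_of_flat_of_nonneg (f := fun k y => (-1 : ℝ) ^ k • f k (-y)) hderiv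
      (fun k y => by simpa [norm_smul] using hb k (-y)) (fun k => by simp [h0])
      (neg_nonneg.2 hx)

end IsQuasiAnalyticWeight

end DenjoyCarleman

/-! ### Density of polynomials in `L²` -/

section CauchySchwarz

variable {α : Type*} [MeasurableSpace α] {μ : Measure α}

theorem integral_abs_mul_le_sqrt_mul_sqrt {f g : α → ℝ} (hf : MemLp f 2 μ) (hg : MemLp g 2 μ) :
    ∫ a, |f a * g a| ∂μ ≤ √(∫ a, f a ^ 2 ∂μ) * √(∫ a, g a ^ 2 ∂μ) := by
  simpa [← abs_mul, Real.sqrt_eq_rpow] using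
    integral_mul_norm_le_Lp_mul_Lq (μ := μ) (f := f) (g := g)
      Real.HolderConjugate.two_two (by simpa using hf) (by simpa using hg)

end CauchySchwarz

section Fourier

variable {E : Type*} [NormedAddCommGroup E] [NormedSpace ℝ E] [MeasurableSpace E] [BorelSpace E]
  {μ : Measure E} {f : E → ℝ}

theorem charFunDual_withDensity_ofReal_sub (hf : Integrable f μ) (L : StrongDual ℝ E) :
    charFunDual (μ.withDensity fun y => ENNReal.ofReal (f y)) L -
        charFunDual (μ.withDensity fun y => ENNReal.ofReal (-f y)) L =
      ∫ y, f y * Complex.exp (L y * Complex.I) ∂μ := by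
  have hint {g : E → ℝ} (hg : Integrable g μ) :
      Integrable (fun y => (g y : ℂ) * Complex.exp (L y * Complex.I)) μ :=
    hg.ofReal.mul_bdd (c := 1) (Continuous.aestronglyMeasurable (by fun_prop))
      (.of_forall fun y => (Complex.norm_exp_ofReal_mul_I _).le)
  have hchar {g : E → ℝ} (hg : Integrable g μ) :
      charFunDual (μ.withDensity fun y => ENNReal.ofReal (g y)) L =
        ∫ y, ((max (g y) 0 : ℝ) : ℂ) * Complex.exp (L y * Complex.I) ∂μ := by
    rw [charFunDual_apply, integral_withDensity_eq_integral_toReal_smul₀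
      hg.aestronglyMeasurable.aemeasurable.ennreal_ofReal (by simp)]
    simp only [ENNReal.toReal_ofReal', Complex.real_smul]
  rw [hchar hf, hchar hf.fun_neg, ← integral_sub (hint hf.pos_part) (hint hf.neg_part)]
  refine integral_congr_ae (.of_forall fun y => ?_)
  have hparts : max (f y) 0 - max (-f y) 0 = f y := posPart_sub_negPart (f y)
  simp only [← sub_mul, ← Complex.ofReal_sub, hparts]

theorem ae_eq_zero_of_integral_mul_cexp_eq_zero [CompleteSpace E] [SecondCountableTopology E]
    (hf : Integrable f μ)
    (h : ∀ L : StrongDual ℝ E, ∫ y, f y * Complex.exp (L y * Complex.I) ∂μ = 0) :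
    f =ᵐ[μ] 0 := by
  have := isFiniteMeasure_withDensity_ofReal hf.2
  have := isFiniteMeasure_withDensity_ofReal hf.fun_neg.2
  have heq : (μ.withDensity fun y => ENNReal.ofReal (f y)) =
      μ.withDensity fun y => ENNReal.ofReal (-f y) :=
    Measure.ext_of_charFunDual <| funext fun L =>
      sub_eq_zero.1 ((charFunDual_withDensity_ofReal_sub hf L).trans (h L))
  filter_upwards [(withDensity_eq_iff hf.aestronglyMeasurable.aemeasurable.ennreal_ofReal
    hf.neg.aestronglyMeasurable.aemeasurable.ennreal_ofReal hf.lintegral_lt_top.ne).1 heq] with y hy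
  have hparts : max (f y) 0 = max (-f y) 0 := by
    simpa only [ENNReal.toReal_ofReal', Pi.neg_apply] using congrArg ENNReal.toReal hy
  rw [Pi.zero_apply, ← posPart_sub_negPart (f y)]
  exact sub_eq_zero.2 hparts

end Fourier

section QuasiAnalyticFourier

variable {α : Type*} [MeasurableSpace α] {μ : Measure α} {g : α → ℂ} {h : α → ℝ}

theorem hasDerivAt_integral_mul_cexp (hh : AEStronglyMeasurable h μ) (hg : Integrable g μ)
    (hgh : Integrable (fun a => g a * (h a * Complex.I)) μ) (τ : ℝ) :
    HasDerivAt (fun τ : ℝ => ∫ a, g a * Complex.exp ((τ * h a : ℝ) * Complex.I) ∂μ)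
      (∫ a, g a * (h a * Complex.I) * Complex.exp ((τ * h a : ℝ) * Complex.I) ∂μ) τ := by
  have hmeas (τ : ℝ) :
      AEStronglyMeasurable (fun a => Complex.exp ((τ * h a : ℝ) * Complex.I)) μ :=
    Continuous.comp_aestronglyMeasurable (g := fun r : ℝ => Complex.exp (r * Complex.I))
      (by fun_prop) (hh.const_mul τ)
  have hexp (τ : ℝ) (a : α) : ‖Complex.exp ((τ * h a : ℝ) * Complex.I)‖ ≤ 1 :=
    (Complex.norm_exp_ofReal_mul_I _).le
  refine (hasDerivAt_integral_of_dominated_loc_of_deriv_le (μ := μ)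
    (F := fun τ a => g a * Complex.exp ((τ * h a : ℝ) * Complex.I))
    (F' := fun τ a => g a * (h a * Complex.I) * Complex.exp ((τ * h a : ℝ) * Complex.I))
    (bound := fun a => ‖g a * (h a * Complex.I)‖) Filter.univ_mem
    (.of_forall fun τ => hg.aestronglyMeasurable.mul (hmeas τ))
    (hg.mul_bdd (hmeas τ) (.of_forall (hexp τ))) (hgh.aestronglyMeasurable.mul (hmeas τ))
    (.of_forall fun a τ _ => ?_) hgh.norm (.of_forall fun a τ _ => ?_)).2
  · rw [norm_mul]
    exact mul_le_of_le_one_right (norm_nonneg _) (hexp τ a)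
  · have hlin : HasDerivAt (fun τ : ℝ => ((τ * h a : ℝ) : ℂ) * Complex.I) (h a * Complex.I) τ := by
      simpa using (((hasDerivAt_id τ).mul_const (h a)).ofReal_comp).mul_const Complex.I
    exact (hlin.cexp.const_mul (g a)).congr_deriv (by ring)

theorem IsQuasiAnalyticWeight.integral_mul_cexp_eq_zero {M : ℕ → ℝ} (hM : IsQuasiAnalyticWeight M)
    (hh : AEStronglyMeasurable h μ) (hint : ∀ l : ℕ, Integrable (fun a => g a * h a ^ l) μ)
    (hbound : ∀ l : ℕ, ∫ a, ‖g a * h a ^ l‖ ∂μ ≤ M l)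
    (hzero : ∀ l : ℕ, ∫ a, g a * h a ^ l ∂μ = 0) (τ : ℝ) :
    ∫ a, g a * Complex.exp ((τ * h a : ℝ) * Complex.I) ∂μ = 0 := by
  have hpow (l : ℕ) :
      (fun a => g a * (h a * Complex.I) ^ l) = fun a => g a * h a ^ l * Complex.I ^ l := by
    ext a; ring
  have hint' (l : ℕ) : Integrable (fun a => g a * (h a * Complex.I) ^ l) μ :=
    hpow l ▸ (hint l).mul_const _
  have hderiv (l : ℕ) (τ : ℝ) := hasDerivAt_integral_mul_cexp hh (hint' l)
    (by simpa only [pow_succ, ← mul_assoc] using hint' (l + 1)) τ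
  simpa using hM.eq_zero_of_flat
    (f := fun l τ => ∫ a, g a * (h a * Complex.I) ^ l *
      Complex.exp ((τ * h a : ℝ) * Complex.I) ∂μ)
    (fun l τ => by simpa only [pow_succ, ← mul_assoc] using hderiv l τ)
    (fun l τ => (norm_integral_le_integral_norm _).trans <| by
      simpa [-Complex.ofReal_mul, Complex.norm_exp_ofReal_mul_I] using hbound l)
    (fun l => by simp [hpow, integral_mul_const, hzero]) τ

end QuasiAnalyticFourier

section Density

variable {σ : Type*} {μ : Measure (σ → ℝ)}

/-- The `L²(μ)`-norms of `P * y_j ^ l`, for each polynomial `P`, are dominated by a constant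
multiple of a quasi-analytic weight that does not depend on `P`. This makes the Fourier transforms
of the densities `f * P`, `f ∈ L²(μ)`, quasi-analytic in the direction `j`. -/
def QuasiAnalyticMoments (μ : Measure (σ → ℝ)) (j : σ) : Prop :=
  ∃ M : ℕ → ℝ, IsQuasiAnalyticWeight M ∧
    ∀ P : MvPolynomial σ ℝ, ∃ C, ∀ l, √(∫ y, eval y (P * X j ^ l) ^ 2 ∂μ) ≤ C * M l

variable (hpoly : ∀ P : MvPolynomial σ ℝ, MemLp (fun y => eval y P) 2 μ)

/-- The linear map sending a polynomial to the class in `L²(μ)` of its evaluation function. -/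
noncomputable def polynomialToL2 : MvPolynomial σ ℝ →ₗ[ℝ] Lp ℝ 2 μ where
  toFun P := (hpoly P).toLp _
  map_add' P R := by
    rw [← MemLp.toLp_add]
    exact MemLp.toLp_congr _ _ (.of_forall fun y => by simp)
  map_smul' c P := by
    rw [RingHom.id_apply, ← MemLp.toLp_const_smul]
    exact MemLp.toLp_congr _ _ (.of_forall fun y => by simp [smul_eval])

theorem coeFn_polynomialToL2 (P : MvPolynomial σ ℝ) :
    polynomialToL2 hpoly P =ᵐ[μ] fun y => eval y P :=
  (hpoly P).coeFn_toLp

variable [Finite σ]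

include hpoly

theorem integral_mul_cexp_sum_eq_zero_of_orthogonal (hqa : ∀ j, QuasiAnalyticMoments μ j)
    {f : (σ → ℝ) → ℝ} (hf : MemLp f 2 μ)
    (horth : ∀ P : MvPolynomial σ ℝ, ∫ y, f y * eval y P ∂μ = 0) (t : σ → ℝ) (s : Finset σ)
    (P : MvPolynomial σ ℝ) :
    ∫ y, ((f y * eval y P : ℝ) : ℂ) * Complex.exp ((∑ j ∈ s, t j * y j : ℝ) * Complex.I) ∂μ
      = 0 := by
  induction s using Finset.cons_induction generalizing P with
  | empty =>
    simp only [Finset.sum_empty, Complex.ofReal_zero, zero_mul, Complex.exp_zero, mul_one]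
    rw [integral_complex_ofReal, horth P, Complex.ofReal_zero]
  | cons j s hj ih =>
    obtain ⟨M, hM, hbound⟩ := hqa j
    obtain ⟨C, hC⟩ := hbound P
    set e : (σ → ℝ) → ℂ := fun y => Complex.exp ((∑ i ∈ s, t i * y i : ℝ) * Complex.I)
    have he (y : σ → ℝ) : ‖e y‖ = 1 := Complex.norm_exp_ofReal_mul_I _
    have hpow (l : ℕ) : (fun y => ((f y * eval y P : ℝ) : ℂ) * e y * (y j : ℂ) ^ l) =
        fun y => ((f y * eval y (P * X j ^ l) : ℝ) : ℂ) * e y := by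
      ext y
      simp only [map_mul, map_pow, eval_X, Complex.ofReal_mul, Complex.ofReal_pow]
      ring
    have hD : 0 < √(∫ y, f y ^ 2 ∂μ) * |C| + 1 := by positivity
    have hzero := (hM.const_mul hD).integral_mul_cexp_eq_zero (h := fun y => y j)
      (g := fun y => ((f y * eval y P : ℝ) : ℂ) * e y)
      (continuous_apply j).aestronglyMeasurable (fun l => ?_) (fun l => ?_)
      (fun l => by rw [hpow, ih]) (t j)
    · rw [← hzero]
      congr 1 with y
      rw [Finset.sum_cons, Complex.ofReal_add, add_mul, Complex.exp_add]
      ring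
    · rw [hpow]
      exact (hf.integrable_mul (hpoly _)).ofReal.mul_bdd (c := 1)
        (Continuous.aestronglyMeasurable (by fun_prop)) (.of_forall fun y => (he y).le)
    · have hnorm (y : σ → ℝ) : ‖((f y * eval y (P * X j ^ l) : ℝ) : ℂ) * e y‖ =
          |f y * eval y (P * X j ^ l)| := by
        rw [norm_mul, he, mul_one, Complex.norm_real, Real.norm_eq_abs]
      have hMl := hM.pos l
      simp only [congrFun (hpow l), hnorm]
      calc ∫ y, |f y * eval y (P * X j ^ l)| ∂μ
          ≤ √(∫ y, f y ^ 2 ∂μ) * √(∫ y, eval y (P * X j ^ l) ^ 2 ∂μ) :=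
            integral_abs_mul_le_sqrt_mul_sqrt hf (hpoly _)
        _ ≤ √(∫ y, f y ^ 2 ∂μ) * (|C| * M l) := by
            gcongr
            exact (hC l).trans (by gcongr; exact le_abs_self C)
        _ ≤ (√(∫ y, f y ^ 2 ∂μ) * |C| + 1) * M l := by linarith

theorem ae_eq_zero_of_orthogonal_polynomials [IsFiniteMeasure μ]
    (hqa : ∀ j, QuasiAnalyticMoments μ j) {f : (σ → ℝ) → ℝ} (hf : MemLp f 2 μ)
    (horth : ∀ P : MvPolynomial σ ℝ, ∫ y, f y * eval y P ∂μ = 0) : f =ᵐ[μ] 0 := by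
  classical
  cases nonempty_fintype σ
  refine ae_eq_zero_of_integral_mul_cexp_eq_zero (hf.integrable (by norm_num)) fun L => ?_
  have hL (y : σ → ℝ) : L y = ∑ j, L (Pi.single j 1) * y j := by
    conv_lhs => rw [pi_eq_sum_univ' y, map_sum]
    simp [mul_comm]
  simpa only [map_one, mul_one, ← hL] using
    integral_mul_cexp_sum_eq_zero_of_orthogonal hpoly hqa hf horth (fun j => L (Pi.single j 1))
      univ 1

theorem topologicalClosure_range_polynomialToL2 [IsFiniteMeasure μ]
    (hqa : ∀ j, QuasiAnalyticMoments μ j) :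
    (LinearMap.range (polynomialToL2 hpoly)).topologicalClosure = ⊤ := by
  rw [Submodule.topologicalClosure_eq_top_iff, Submodule.eq_bot_iff]
  intro f hf
  refine Lp.eq_zero_iff_ae_eq_zero.2
    (ae_eq_zero_of_orthogonal_polynomials hpoly hqa (Lp.memLp f) fun P => ?_)
  rw [← (Submodule.mem_orthogonal _ f).1 hf _ ⟨P, rfl⟩, L2.inner_def]
  refine integral_congr_ae ?_
  filter_upwards [coeFn_polynomialToL2 hpoly P] with y hy
  simp [hy]

theorem exists_integral_sq_sub_eval_lt [IsFiniteMeasure μ] (hqa : ∀ j, QuasiAnalyticMoments μ j)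
    {φ : (σ → ℝ) → ℝ} (hφ : MemLp φ 2 μ) {δ : ℝ} (hδ : 0 < δ) :
    ∃ P : MvPolynomial σ ℝ, ∫ y, (φ y - eval y P) ^ 2 ∂μ < δ := by
  have hmem : hφ.toLp φ ∈ (LinearMap.range (polynomialToL2 hpoly)).topologicalClosure :=
    topologicalClosure_range_polynomialToL2 hpoly hqa ▸ trivial
  obtain ⟨_, ⟨P, rfl⟩, hP⟩ := Metric.mem_closure_iff.1 hmem (√δ) (Real.sqrt_pos.2 hδ)
  refine ⟨P, ?_⟩
  have hnorm : ‖hφ.toLp φ - polynomialToL2 hpoly P‖ ^ 2 = ∫ y, (φ y - eval y P) ^ 2 ∂μ := by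
    rw [← real_inner_self_eq_norm_sq, L2.inner_def]
    refine integral_congr_ae ?_
    filter_upwards [Lp.coeFn_sub (hφ.toLp φ) (polynomialToL2 hpoly P),
      coeFn_polynomialToL2 hpoly P, hφ.coeFn_toLp] with y hsub hPy hφy
    rw [hsub, Pi.sub_apply, hPy, hφy, real_inner_self_eq_norm_sq, Real.norm_eq_abs, sq_abs]
  rwa [← hnorm, ← Real.lt_sqrt (norm_nonneg _), ← dist_eq_norm]

end Density

/-! ### Carleman's condition -/

section CarlemanInequality

theorem add_one_mul_le_mul_add_pow_div_pow {x u : ℝ} (hx : 0 ≤ x) (hu : 0 < u) (n : ℕ) :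
    (n + 1) * x ≤ n * u + x ^ (n + 1) / u ^ n := by
  have hbernoulli := one_add_mul_sub_le_pow (a := x / u) (by linarith [div_nonneg hx hu.le]) (n + 1)
  calc (n + 1) * x = n * u + u * (1 + (n + 1 : ℕ) * (x / u - 1)) := by
        push_cast; field_simp; ring
    _ ≤ n * u + u * (x / u) ^ (n + 1) := by gcongr
    _ = n * u + x ^ (n + 1) / u ^ n := by rw [div_pow, pow_succ u]; field_simp

-- Bernoulli's inequality at `u = n / (n + 1) * g`, where `(u / g)⁻¹ ^ n = (1 + 1 / n) ^ n ≤ e`.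
theorem add_half_le_mul_add_exp_mul {n : ℕ} (hn : n ≠ 0) {g g' b : ℝ} (hg : 0 < g) (hg' : 0 ≤ g')
    (hb : 0 ≤ b) (h : g' ^ (n + 1) = g ^ n * b) :
    (n + 1) * g' + g / 2 ≤ n * g + Real.exp 1 * b := by
  have hn1 : (1 : ℝ) ≤ n := mod_cast Nat.one_le_iff_ne_zero.2 hn
  have hμ : (n / (n + 1) : ℝ)⁻¹ = 1 + (n : ℝ)⁻¹ := by field_simp
  have hexp : g' ^ (n + 1) / (n / (n + 1) * g) ^ n ≤ Real.exp 1 * b := by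
    calc _ = ((n / (n + 1) : ℝ)⁻¹) ^ n * b := by rw [h, mul_pow, inv_pow]; field_simp
      _ ≤ Real.exp 1 * b := by rw [hμ]; gcongr; exact Real.one_add_inv_pow_le_exp
  have hlin : n * (n / (n + 1) * g) + g / 2 ≤ n * g := by
    have : (n : ℝ) * (n / (n + 1)) + 1 / 2 ≤ n := by
      rw [← le_sub_iff_add_le, mul_div_assoc', div_le_iff₀ (by positivity)]
      linarith
    linarith [mul_le_mul_of_nonneg_right this hg.le]
  linarith [add_one_mul_le_mul_add_pow_div_pow hg' (show 0 < n / (n + 1) * g by positivity) n]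

/-- The geometric mean of `b 0, …, b n`. -/
noncomputable def geomMean (b : ℕ → ℝ) (n : ℕ) : ℝ :=
  (∏ i ∈ range (n + 1), b i) ^ ((n : ℝ) + 1)⁻¹

variable {b : ℕ → ℝ}

theorem geomMean_pos (hb : ∀ k, 0 < b k) (n : ℕ) : 0 < geomMean b n :=
  Real.rpow_pos_of_pos (Finset.prod_pos fun i _ => hb i) _

theorem geomMean_pow (hb : ∀ k, 0 < b k) (n : ℕ) :
    geomMean b n ^ (n + 1) = ∏ i ∈ range (n + 1), b i := by
  simpa [geomMean] using
    Real.rpow_inv_natCast_pow (Finset.prod_nonneg fun i _ => (hb i).le) n.succ_ne_zero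

theorem sum_geomMean_le (hb : ∀ k, 0 < b k) (n : ℕ) :
    (∑ j ∈ range n, geomMean b j / 2) + (n + 1) * geomMean b n ≤
      b 0 + Real.exp 1 * ∑ j ∈ range n, b (j + 1) := by
  induction n with
  | zero => simp [geomMean]
  | succ n ih =>
    have hstep := add_half_le_mul_add_exp_mul n.succ_ne_zero (geomMean_pos hb n)
      (geomMean_pos hb (n + 1)).le (hb (n + 1)).le
      (by rw [geomMean_pow hb, geomMean_pow hb, Finset.prod_range_succ])
    rw [Finset.sum_range_succ, Finset.sum_range_succ, mul_add]
    push_cast at hstep ⊢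
    linarith

theorem summable_geomMean (hb : ∀ k, 0 < b k) (hs : Summable b) : Summable (geomMean b) := by
  have hs' : Summable fun j => b (j + 1) := (summable_nat_add_iff 1).2 hs
  refine summable_of_sum_range_le (c := 2 * (b 0 + Real.exp 1 * ∑' j, b (j + 1)))
    (fun j => (geomMean_pos hb j).le) fun n => ?_
  have htail : 0 ≤ (n + 1) * geomMean b n := by have := geomMean_pos hb n; positivity
  have htsum := mul_le_mul_of_nonneg_left
    (hs'.sum_le_tsum (range n) fun j _ => (hb (j + 1)).le) (Real.exp_pos 1).le
  have hsum := sum_geomMean_le hb n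
  rw [← Finset.sum_div] at hsum
  linarith

theorem summable_rpow_neg_inv_of_summable_ratio {t : ℕ → ℝ} (ht : ∀ k, 0 < t k)
    (hs : Summable fun k => t k / t (k + 1)) :
    Summable fun k : ℕ => t (k + 1) ^ (-((k : ℝ) + 1)⁻¹) := by
  refine .of_nonneg_of_le (fun k => Real.rpow_nonneg (ht _).le _) (fun k => ?_)
    ((summable_geomMean (fun k => div_pos (ht k) (ht (k + 1))) hs).mul_left (max 1 (t 0)⁻¹))
  have ht0 := ht 0
  have hroot : (t 0)⁻¹ ^ ((k : ℝ) + 1)⁻¹ ≤ max 1 (t 0)⁻¹ := by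
    calc (t 0)⁻¹ ^ ((k : ℝ) + 1)⁻¹ ≤ max 1 (t 0)⁻¹ ^ ((k : ℝ) + 1)⁻¹ := by
          gcongr; exact le_max_right _ _
      _ ≤ max 1 (t 0)⁻¹ ^ (1 : ℝ) :=
          Real.rpow_le_rpow_of_exponent_le (le_max_left _ _) (inv_le_one_of_one_le₀ (by simp))
      _ = max 1 (t 0)⁻¹ := Real.rpow_one _
  calc t (k + 1) ^ (-((k : ℝ) + 1)⁻¹)
      = (t 0)⁻¹ ^ ((k : ℝ) + 1)⁻¹ * (t 0 / t (k + 1)) ^ ((k : ℝ) + 1)⁻¹ := by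
        rw [← Real.mul_rpow (by positivity) (div_pos ht0 (ht _)).le, Real.rpow_neg (ht _).le,
          ← Real.inv_rpow (ht _).le]
        congr 1
        field_simp
    _ ≤ max 1 (t 0)⁻¹ * (t 0 / t (k + 1)) ^ ((k : ℝ) + 1)⁻¹ :=
        mul_le_mul_of_nonneg_right hroot (Real.rpow_nonneg (div_pos ht0 (ht _)).le _)
    _ = max 1 (t 0)⁻¹ * geomMean (fun k => t k / t (k + 1)) k := by
        have htel (n : ℕ) : ∏ i ∈ range n, t i / t (i + 1) = t 0 / t n :=
          Finset.prod_range_induction _ _ (div_self (ht 0).ne') n fun i _ => by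
            rw [div_mul_div_cancel₀ (ht i).ne']
        rw [geomMean, htel]

end CarlemanInequality

section Moments

variable {m : ℕ} {ν : Measure (Fin m → ℝ)}

namespace momentsFinite

theorem integrable (hmom : momentsFinite ν) (P : MvPolynomial (Fin m) ℝ) :
    Integrable (fun y => eval y P) ν :=
  (integrable_norm_iff P.continuous_eval.aestronglyMeasurable).1 (hmom P)

theorem isFiniteMeasure (hmom : momentsFinite ν) : IsFiniteMeasure ν := by
  simpa [integrable_const_iff] using hmom.integrable 1

theorem memLp (hmom : momentsFinite ν) (P : MvPolynomial (Fin m) ℝ) :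
    MemLp (fun y => eval y P) 2 ν := by
  rw [memLp_two_iff_integrable_sq P.continuous_eval.aestronglyMeasurable]
  exact (hmom.integrable (P ^ 2)).congr (.of_forall fun y => map_pow _ _ _)

end momentsFinite

namespace Carleman

theorem moment_pos (hcar : Carleman ν) (hmom : momentsFinite ν) (j : Fin m) (k : ℕ) :
    0 < ∫ y, y j ^ (2 * k) ∂ν := by
  have hnonneg : 0 ≤ fun y : Fin m → ℝ => y j ^ (2 * k) := fun y =>
    (even_two_mul k).pow_nonneg (y j)
  refine (integral_nonneg hnonneg).lt_of_ne fun h0 => hcar j ?_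
  have hae := (integral_eq_zero_iff_of_nonneg hnonneg
    (by simpa using hmom.integrable (X j ^ (2 * k)))).1 h0.symm
  have hzero (d : ℕ) : ∫ y, y j ^ (2 * (d + 1)) ∂ν = 0 := by
    refine integral_eq_zero_of_ae ?_
    filter_upwards [hae] with y hy
    simp [show y j = 0 from eq_zero_of_pow_eq_zero hy]
  simp only [hzero]
  convert summable_zero with d
  exact Real.zero_rpow (div_ne_zero (by norm_num) (by positivity))

theorem isQuasiAnalyticWeight_sqrt_moment (hcar : Carleman ν) (hmom : momentsFinite ν)
    (j : Fin m) : IsQuasiAnalyticWeight fun k => √(∫ y, y j ^ (2 * k) ∂ν) where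
  pos k := Real.sqrt_pos.2 (hcar.moment_pos hmom j k)
  sq_le k := by
    have hcs :=
      integral_abs_mul_le_sqrt_mul_sqrt (hmom.memLp (X j ^ k)) (hmom.memLp (X j ^ (k + 2)))
    have habs (y : Fin m → ℝ) : |y j ^ k * y j ^ (k + 2)| = y j ^ (2 * (k + 1)) := by
      rw [← pow_add, show k + (k + 2) = 2 * (k + 1) by ring]
      exact abs_of_nonneg ((even_two_mul (k + 1)).pow_nonneg _)
    simp only [map_pow, eval_X, habs, ← pow_mul'] at hcs
    rwa [Real.sq_sqrt (hcar.moment_pos hmom j _).le]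
  not_summable_ratio hsum := by
    refine hcar j ((summable_rpow_neg_inv_of_summable_ratio (fun k =>
      Real.sqrt_pos.2 (hcar.moment_pos hmom j k)) hsum).congr fun d => ?_)
    rw [Real.sqrt_eq_rpow, ← Real.rpow_mul (hcar.moment_pos hmom j _).le]
    congr 1
    field_simp

end Carleman

/-- The measure with density `1 + g²` with respect to `ν`: approximation in `L²` of this measure
controls integrals against `g ν`. -/
noncomputable def tilt (ν : Measure (Fin m → ℝ)) (g : MvPolynomial (Fin m) ℝ) :
    Measure (Fin m → ℝ) :=
  ν.withDensity fun y => ENNReal.ofReal (eval y (1 + g ^ 2))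

section Tilt

variable (g : MvPolynomial (Fin m) ℝ)

theorem one_add_sq_eval_pos (y : Fin m → ℝ) : 0 < eval y (1 + g ^ 2) := by
  simp only [map_add, map_one, map_pow]
  positivity

theorem integral_tilt (f : (Fin m → ℝ) → ℝ) :
    ∫ y, f y ∂(tilt ν g) = ∫ y, eval y (1 + g ^ 2) * f y ∂ν := by
  rw [tilt, integral_withDensity_eq_integral_toReal_smul
    (continuous_eval _).measurable.ennreal_ofReal (by simp)]
  simp only [ENNReal.toReal_ofReal (one_add_sq_eval_pos g _).le, smul_eq_mul]

theorem integrable_tilt_iff {f : (Fin m → ℝ) → ℝ} :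
    Integrable f (tilt ν g) ↔ Integrable (fun y => eval y (1 + g ^ 2) * f y) ν := by
  rw [tilt, integrable_withDensity_iff_integrable_smul'
    (continuous_eval _).measurable.ennreal_ofReal (by simp)]
  simp only [ENNReal.toReal_ofReal (one_add_sq_eval_pos g _).le, smul_eq_mul]

theorem momentsFinite.tilt (hmom : momentsFinite ν) : momentsFinite (tilt ν g) := fun P => by
  refine Integrable.abs ((integrable_tilt_iff g).2 ?_)
  exact (hmom.integrable ((1 + g ^ 2) * P)).congr (.of_forall fun y => map_mul _ _ _)

theorem Carleman.quasiAnalyticMoments_tilt (hcar : Carleman ν) (hmom : momentsFinite ν)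
    (j : Fin m) : QuasiAnalyticMoments (tilt ν g) j := by
  refine ⟨_, (hcar.isQuasiAnalyticWeight_sqrt_moment hmom j).sqrt_even, fun P => ?_⟩
  set R := (1 + g ^ 2) * P ^ 2 with hR
  refine ⟨√√(∫ y, eval y R ^ 2 ∂ν), fun l => ?_⟩
  have habs (y : Fin m → ℝ) :
      |eval y R * y j ^ (2 * l)| = eval y (1 + g ^ 2) * eval y (P * X j ^ l) ^ 2 := by
    rw [abs_of_nonneg, hR, map_mul, map_mul, map_pow, map_pow, eval_X]
    · ring
    · rw [hR, map_mul, map_pow, pow_mul]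
      have := (one_add_sq_eval_pos g y).le
      positivity
  have hcs := integral_abs_mul_le_sqrt_mul_sqrt (hmom.memLp R) (hmom.memLp (X j ^ (2 * l)))
  simp only [map_pow, eval_X, habs, ← pow_mul'] at hcs
  rw [integral_tilt, ← Real.sqrt_mul (Real.sqrt_nonneg _)]
  exact Real.sqrt_le_sqrt hcs

end Tilt

theorem integral_indicator_neg {U : Set (Fin m → ℝ)} (hU : MeasurableSet U) (hνU : 0 < ν U)
    {g : (Fin m → ℝ) → ℝ} (hg : Integrable g ν) (hneg : ∀ y ∈ U, g y < 0) :
    ∫ y, U.indicator g y ∂ν < 0 := by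
  rw [integral_indicator hU, ← neg_pos, ← integral_neg,
    setIntegral_pos_iff_support_of_nonneg_ae
      ((ae_restrict_iff' hU).2 (.of_forall fun y hy => (neg_pos.2 (hneg y hy)).le))
      hg.neg.integrableOn]
  refine hνU.trans_le (measure_mono fun y hy => ⟨?_, hy⟩)
  exact (neg_pos.2 (hneg y hy)).ne'

theorem sq_mul_le_indicator_add_sq {α : Type*} (g : α → ℝ) (h : ℝ) (a : α) :
    h ^ 2 * g a ≤ {a | g a < 0}.indicator g a / 2 +
      (1 + g a ^ 2) * ({a | g a < 0}.indicator 1 a - h) ^ 2 := by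
  by_cases ha : g a < 0
  · simp only [Set.indicator_of_mem (s := {a | g a < 0}) ha, Pi.one_apply]
    nlinarith [sq_nonneg (1 - 2 * h), sq_nonneg (1 - h),
      mul_nonneg (sq_nonneg (1 - h)) (sq_nonneg (g a + 1))]
  · simp only [Set.indicator_of_notMem (s := {a | g a < 0}) ha]
    nlinarith [mul_nonneg (sq_nonneg h) (sq_nonneg (g a - 1)), sq_nonneg h,
      mul_nonneg (sq_nonneg h) (not_lt.1 ha)]

-- A polynomial `h` close in `L²` to the indicator function of `{g < 0}` has `∫ h² g dν < 0`.
theorem Carleman.eval_nonneg_of_mem_support (hcar : Carleman ν) (hmom : momentsFinite ν)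
    {g : MvPolynomial (Fin m) ℝ}
    (hg : ∀ h : MvPolynomial (Fin m) ℝ, 0 ≤ ∫ y, eval y (h ^ 2 * g) ∂ν) {y : Fin m → ℝ}
    (hy : y ∈ ν.support) : 0 ≤ eval y g := by
  by_contra! hlt
  set U := {y : Fin m → ℝ | eval y g < 0}
  have hUo : IsOpen U := isOpen_lt g.continuous_eval continuous_const
  have := (hmom.tilt g).isFiniteMeasure
  have hφ : MemLp (U.indicator (1 : (Fin m → ℝ) → ℝ)) 2 (tilt ν g) :=
    (memLp_const (1 : ℝ)).indicator hUo.measurableSet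
  set E := ∫ y, U.indicator (fun y => eval y g) y ∂ν with hE
  have hE0 : E < 0 := integral_indicator_neg hUo.measurableSet
    (Measure.mem_support_iff_forall _ |>.1 hy U (hUo.mem_nhds hlt)) (hmom.integrable g)
    fun y hy => hy
  obtain ⟨h, hh⟩ := exists_integral_sq_sub_eval_lt (hmom.tilt g).memLp
    (hcar.quasiAnalyticMoments_tilt g hmom) hφ (half_pos (neg_pos.2 hE0))
  have hpointwise (y : Fin m → ℝ) : eval y (h ^ 2 * g) ≤ U.indicator (fun y => eval y g) y / 2 +
      eval y (1 + g ^ 2) * (U.indicator 1 y - eval y h) ^ 2 := by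
    simpa only [map_mul, map_pow, map_add, map_one] using
      sq_mul_le_indicator_add_sq (fun y => eval y g) (eval y h) y
  have hintφ : Integrable (fun y => U.indicator (fun y => eval y g) y / 2) ν :=
    ((hmom.integrable g).indicator hUo.measurableSet).div_const 2
  have hintsub := (integrable_tilt_iff g).1 (hφ.sub ((hmom.tilt g).memLp h)).integrable_sq
  have hle := integral_mono (hmom.integrable (h ^ 2 * g)) (hintφ.add hintsub) hpointwise
  simp only [Pi.add_apply, Pi.sub_apply] at hle hintsub
  rw [integral_add hintφ hintsub, integral_div, ← hE, ← integral_tilt] at hle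
  linarith [hg h]

end Moments

/-! ### Pure states -/

section PureStates

variable {V : Type*} [AddCommGroup V] [Module ℝ V]

/-- `e` is an order unit of the cone `Q`: every vector is dominated by a multiple of `e`. -/
structure IsOrderUnit (Q : PointedCone ℝ V) (e : V) : Prop where
  mem : e ∈ Q
  exists_smul_sub_mem (v : V) : ∃ c : ℝ, c • e - v ∈ Q

/-- The states of a cone `Q` normalized at `e`: linear functionals nonnegative on `Q` with value `1`
at `e`. They are regarded as functions to give them the topology of pointwise convergence. -/
def stateSet (Q : PointedCone ℝ V) (e : V) : Set (V → ℝ) :=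
  {f | f ∈ Set.range ((⇑) : (V →ₗ[ℝ] ℝ) → V → ℝ) ∧ (∀ w ∈ Q, 0 ≤ f w) ∧ f e = 1}

variable {Q : PointedCone ℝ V} {e v : V}

theorem coe_mem_stateSet {L : V →ₗ[ℝ] ℝ} :
    ⇑L ∈ stateSet Q e ↔ (∀ w ∈ Q, 0 ≤ L w) ∧ L e = 1 :=
  and_iff_right ⟨L, rfl⟩

theorem isClosed_stateSet : IsClosed (stateSet Q e) := by
  have hnonneg : IsClosed {f : V → ℝ | ∀ w ∈ Q, 0 ≤ f w} := by
    simp only [Set.ofPred_forall]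
    exact isClosed_iInter fun w => isClosed_iInter fun _ =>
      isClosed_le continuous_const (continuous_apply w)
  exact (LinearMap.isClosed_range_coe V ℝ (RingHom.id ℝ)).inter
    (hnonneg.inter (isClosed_eq (continuous_apply e) continuous_const))

theorem IsOrderUnit.isCompact_stateSet (he : IsOrderUnit Q e) : IsCompact (stateSet Q e) := by
  choose c hc using he.exists_smul_sub_mem
  refine (isCompact_univ_pi fun v => isCompact_Icc (a := -c (-v)) (b := c v)).of_isClosed_subset
    isClosed_stateSet ?_
  rintro _ ⟨⟨L, rfl⟩, hL, hLe⟩ v -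
  have hle (v : V) : L v ≤ c v := by simpa [hLe] using hL _ (hc v)
  exact ⟨by linarith [hle (-v), map_neg L v], hle v⟩

theorem IsOrderUnit.neg_notMem_sup_hull_neg (he : IsOrderUnit Q e) (hv : v ∉ Q) :
    -e ∉ Q ⊔ PointedCone.hull ℝ {-v} := by
  intro hmem
  obtain ⟨w, hw, _, hu, hwu⟩ := Submodule.mem_sup.1 hmem
  obtain ⟨⟨t, ht⟩, rfl⟩ := Submodule.mem_span_singleton.1 hu
  replace hwu : w + t • -v = -e := hwu
  rcases ht.eq_or_lt with rfl | ht
  · obtain ⟨c, hc⟩ := he.exists_smul_sub_mem (-v)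
    obtain rfl : w = -e := by simpa using hwu
    refine hv ?_
    convert Q.add_mem hc (Q.add_mem (PointedCone.smul_mem Q (abs_nonneg c) hw)
      (PointedCone.smul_mem Q (sub_nonneg.2 (le_abs_self c)) he.mem)) using 1
    module
  · refine hv ?_
    convert PointedCone.smul_mem Q (inv_pos.2 ht).le (Q.add_mem hw he.mem) using 1
    rw [← neg_eq_iff_eq_neg.2 hwu, ← sub_eq_add_neg, smul_neg, ← sub_eq_add_neg, sub_sub_cancel,
      inv_smul_smul₀ ht.ne']

-- M. Riesz extension of `t • e ↦ t` along the cone generated by `Q` and `-v`.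
theorem IsOrderUnit.exists_state_nonpos (he : IsOrderUnit Q e) (hv : v ∉ Q) :
    ∃ L : V →ₗ[ℝ] ℝ, ⇑L ∈ stateSet Q e ∧ L v ≤ 0 := by
  set C := Q ⊔ PointedCone.hull ℝ {-v}
  have hneg : -e ∉ C := he.neg_notMem_sup_hull_neg hv
  have he0 : e ≠ 0 := by rintro rfl; simp at hneg
  have hsmul {c : ℝ} (hc : c • e ∈ C) : 0 ≤ c := by
    by_contra! hlt
    refine hneg ?_
    convert PointedCone.smul_mem C (inv_pos.2 (neg_pos.2 hlt)).le hc using 1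
    rw [smul_smul, inv_neg, neg_mul, inv_mul_cancel₀ hlt.ne, neg_one_smul]
  obtain ⟨L, hLe, hL⟩ := riesz_extension C (LinearPMap.mkSpanSingleton e (1 : ℝ) he0)
    (by
      rintro ⟨_, hx⟩ hxC
      obtain ⟨c, rfl⟩ := Submodule.mem_span_singleton.1 hx
      have hval := LinearPMap.mkSpanSingleton'_apply (σ := RingHom.id ℝ) e (1 : ℝ)
        (fun c hc => by simpa [he0] using hc) c hx
      exact (hsmul hxC).trans_eq (by simpa using hval.symm))
    (fun y => by
      obtain ⟨c, hc⟩ := he.exists_smul_sub_mem (-y)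
      refine ⟨⟨c • e, Submodule.mem_span_singleton.2 ⟨c, rfl⟩⟩, Submodule.mem_sup_left ?_⟩
      simpa using hc)
  refine ⟨L, coe_mem_stateSet.2 ⟨fun w hw => hL w (Submodule.mem_sup_left hw), ?_⟩, ?_⟩
  · exact (hLe ⟨e, Submodule.mem_span_singleton_self e⟩).trans
      (LinearPMap.mkSpanSingleton_apply ℝ ℝ he0 1)
  · have := hL (-v) (Submodule.mem_sup_right (Submodule.mem_span_singleton_self _))
    rwa [map_neg, neg_nonneg] at this

theorem IsOrderUnit.exists_extreme_state_nonpos (he : IsOrderUnit Q e) (hv : v ∉ Q) :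
    ∃ L : V →ₗ[ℝ] ℝ, ⇑L ∈ (stateSet Q e).extremePoints ℝ ∧ L v ≤ 0 := by
  obtain ⟨L₀, hL₀, hL₀v⟩ := he.exists_state_nonpos hv
  set φ : StrongDual ℝ (V → ℝ) := -ContinuousLinearMap.proj v
  obtain ⟨f₁, hf₁, hmax⟩ :=
    he.isCompact_stateSet.exists_isMaxOn ⟨_, hL₀⟩ φ.continuous.continuousOn
  have hexp : IsExposed ℝ (stateSet Q e) (φ.toExposed (stateSet Q e)) :=
    ContinuousLinearMap.toExposed.isExposed
  obtain ⟨f, hf⟩ := (hexp.isCompact he.isCompact_stateSet).extremePoints_nonempty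
    ⟨f₁, hf₁, fun g hg => hmax hg⟩
  obtain ⟨⟨⟨L, rfl⟩, -⟩, hLmax⟩ := hf.1
  refine ⟨L, hexp.isExtreme.extremePoints_subset_extremePoints hf, ?_⟩
  have hle : L v ≤ L₀ v := neg_le_neg_iff.1 (hLmax _ hL₀)
  exact hle.trans hL₀v

theorem eq_smul_of_mem_extremePoints_stateSet {L g : V →ₗ[ℝ] ℝ}
    (hL : ⇑L ∈ (stateSet Q e).extremePoints ℝ) (hg : ∀ w ∈ Q, 0 ≤ g w)
    (hgL : ∀ w ∈ Q, g w ≤ L w) (hg0 : 0 < g e) (hg1 : g e < 1) : g = g e • L := by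
  obtain ⟨hmem, hext⟩ := mem_extremePoints.1 hL
  have hLe : L e = 1 := (coe_mem_stateSet.1 hmem).2
  have hg1' : 0 < 1 - g e := sub_pos.2 hg1
  have h₁ : ⇑((g e)⁻¹ • g) ∈ stateSet Q e :=
    coe_mem_stateSet.2 ⟨fun w hw => mul_nonneg (inv_pos.2 hg0).le (hg w hw), by simp [hg0.ne']⟩
  have h₂ : ⇑((1 - g e)⁻¹ • (L - g)) ∈ stateSet Q e :=
    coe_mem_stateSet.2 ⟨fun w hw => mul_nonneg (inv_pos.2 hg1').le (sub_nonneg.2 (hgL w hw)),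
      by simp [hLe, hg1'.ne']⟩
  have hseg := (hext _ h₁ _ h₂ ⟨g e, 1 - g e, hg0, hg1', by ring, by
    ext u; simp [hg0.ne', hg1'.ne']⟩).1
  rw [← DFunLike.coe_injective hseg, smul_inv_smul₀ hg0.ne']

variable {A : Type*} [Ring A] [Module A V]

theorem exists_abs_le_mul_of_nonneg (hmul : ∀ a : A, ∃ c : ℝ, ∀ w ∈ Q, c • w + a • w ∈ Q)
    {L : V →ₗ[ℝ] ℝ} (hL : ∀ w ∈ Q, 0 ≤ L w) (a : A) :
    ∃ c > 0, ∀ w ∈ Q, |L (a • w)| ≤ c * L w := by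
  obtain ⟨c₁, h₁⟩ := hmul a
  obtain ⟨c₂, h₂⟩ := hmul (-a)
  refine ⟨max (max c₁ c₂) 1, by positivity, fun w hw => abs_le'.2 ⟨?_, ?_⟩⟩
  · have h := hL _ (h₂ w hw)
    simp only [map_add, map_smul, neg_smul, map_neg, smul_eq_mul] at h
    nlinarith [hL w hw, le_max_left (max c₁ c₂) 1, le_max_right c₁ c₂]
  · have h := hL _ (h₁ w hw)
    simp only [map_add, map_smul, smul_eq_mul] at h
    nlinarith [hL w hw, le_max_left (max c₁ c₂) 1, le_max_left c₁ c₂]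

variable [Algebra ℝ A] [IsScalarTower ℝ A V]

-- `u ↦ (2 c L u + L (a • u)) / (4 c)` lies between `0` and `L`, hence is a multiple of `L`.
theorem map_smul_eq_mul_of_mem_extremePoints_stateSet
    (hmul : ∀ a : A, ∃ c : ℝ, ∀ w ∈ Q, c • w + a • w ∈ Q) (he : e ∈ Q) {L : V →ₗ[ℝ] ℝ}
    (hL : ⇑L ∈ (stateSet Q e).extremePoints ℝ) (a : A) (w : V) :
    L (a • w) = L (a • e) * L w := by
  obtain ⟨hLQ, hLe⟩ := coe_mem_stateSet.1 hL.1
  obtain ⟨c, hc, habs⟩ := exists_abs_le_mul_of_nonneg hmul hLQ a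
  obtain ⟨g, hgu⟩ : ∃ g : V →ₗ[ℝ] ℝ, ∀ u, g u = (2 * c * L u + L (a • u)) / (4 * c) :=
    ⟨(4 * c)⁻¹ • ((2 * c) • L + L ∘ₗ Algebra.lsmul ℝ ℝ V a), fun u => by simp; ring⟩
  have hbounds (u : V) (hu : u ∈ Q) := abs_le.1 (habs u hu)
  have hpos (u : V) (hu : u ∈ Q) : 0 ≤ c * L u := mul_nonneg hc.le (hLQ u hu)
  have hbe := hbounds e he
  rw [hLe] at hbe
  have hprop := eq_smul_of_mem_extremePoints_stateSet hL (g := g)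
    (fun u hu => by
      rw [hgu]; exact div_nonneg (by linarith [hbounds u hu, hpos u hu]) (by linarith))
    (fun u hu => by rw [hgu, div_le_iff₀ (by linarith)]; linarith [hbounds u hu, hpos u hu])
    (by rw [hgu, hLe]; exact div_pos (by linarith) (by linarith))
    (by rw [hgu, hLe, div_lt_one (by linarith)]; linarith)
  have hw := LinearMap.congr_fun hprop w
  rw [LinearMap.smul_apply, smul_eq_mul, hgu, hgu, hLe] at hw
  field_simp at hw
  linarith

theorem IsOrderUnit.exists_pure_state (he : IsOrderUnit Q e)
    (hmul : ∀ a : A, ∃ c : ℝ, ∀ w ∈ Q, c • w + a • w ∈ Q) (hv : v ∉ Q) :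
    ∃ (L : V →ₗ[ℝ] ℝ) (χ : A →ₐ[ℝ] ℝ), (∀ w ∈ Q, 0 ≤ L w) ∧ L e = 1 ∧ L v ≤ 0 ∧
      ∀ a w, L (a • w) = χ a * L w := by
  obtain ⟨L, hL, hLv⟩ := he.exists_extreme_state_nonpos hv
  obtain ⟨hLQ, hLe⟩ := coe_mem_stateSet.1 hL.1
  have hLmul := map_smul_eq_mul_of_mem_extremePoints_stateSet hmul he.mem hL
  exact ⟨L, .ofLinearMap (L ∘ₗ (LinearMap.toSpanSingleton A V e).restrictScalars ℝ) (by simp [hLe])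
    fun a b => by simp [mul_smul, hLmul a (b • e)], hLQ, hLe, hLv, hLmul⟩

end PureStates

/-! ### Bounded fractions -/

section SumsOfSquares

theorem isSumSq_map {R S F : Type*} [NonAssocSemiring R] [NonAssocSemiring S] [FunLike F R S]
    [RingHomClass F R S] (φ : F) {a : R} (ha : IsSumSq a) : IsSumSq (φ a) := by
  induction ha with
  | zero => simp
  | sq_add a _ ih => rw [map_add, map_mul]; exact .sq_add _ ih

variable {A : Type*} [CommRing A] [Algebra ℝ A]

theorem isSumSq_algebraMap {c : ℝ} (hc : 0 ≤ c) : IsSumSq (algebraMap ℝ A c) := by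
  rw [← Real.mul_self_sqrt hc, map_mul]
  exact IsSumSq.mul_self _

-- `2 (1 + a) = (1 - a²) + (1 + a)²`
theorem isSumSq_one_add_of_isSumSq_one_sub_mul_self {a : A} (h : IsSumSq (1 - a * a)) :
    IsSumSq (1 + a) := by
  convert (isSumSq_algebraMap (A := A) (c := 1 / 2) (by norm_num)).mul
    (h.add (IsSumSq.mul_self (1 + a))) using 1
  have htwo : algebraMap ℝ A (1 / 2) * 2 = 1 := by
    rw [← map_ofNat (algebraMap ℝ A) 2, ← map_mul]; norm_num
  linear_combination -(1 + a) * htwo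

variable (A) in
/-- The elements of `A` that are bounded with respect to the preordering of sums of squares:
both `c + a` and `c - a` are sums of squares for some constant `c`. -/
def sosBounded : Submodule ℝ A where
  carrier := {a | ∃ c : ℝ, IsSumSq (algebraMap ℝ A c + a) ∧ IsSumSq (algebraMap ℝ A c - a)}
  zero_mem' := ⟨0, by simp, by simp⟩
  add_mem' := by
    rintro a b ⟨c, ha, ha'⟩ ⟨d, hb, hb'⟩
    exact ⟨c + d, by rw [map_add, add_add_add_comm]; exact ha.add hb,
      by rw [map_add, add_sub_add_comm]; exact ha'.add hb'⟩
  smul_mem' := by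
    rintro r a ⟨c, ha, ha'⟩
    rcases le_total 0 r with hr | hr
    · refine ⟨r * c, ?_, ?_⟩
      · convert (isSumSq_algebraMap hr).mul ha using 1
        rw [map_mul, Algebra.smul_def]; ring
      · convert (isSumSq_algebraMap hr).mul ha' using 1
        rw [map_mul, Algebra.smul_def]; ring
    · refine ⟨-r * c, ?_, ?_⟩
      · convert (isSumSq_algebraMap (neg_nonneg.2 hr)).mul ha' using 1
        rw [map_mul, Algebra.smul_def, map_neg]; ring
      · convert (isSumSq_algebraMap (neg_nonneg.2 hr)).mul ha using 1
        rw [map_mul, Algebra.smul_def, map_neg]; ring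

theorem mem_sosBounded_of_isSumSq_one_sub_mul_self {a : A} (h : IsSumSq (1 - a * a)) :
    a ∈ sosBounded A := by
  refine ⟨1, ?_, ?_⟩
  · simpa using isSumSq_one_add_of_isSumSq_one_sub_mul_self h
  · simpa [sub_eq_add_neg] using
      isSumSq_one_add_of_isSumSq_one_sub_mul_self (a := -a) (by rwa [neg_mul_neg])

end SumsOfSquares

section BoundedFractions

variable {σ : Type*}

theorem totalDegree_mul_le_two_mul_add {P R : MvPolynomial σ ℝ} {k l : ℕ}
    (hP : P.totalDegree ≤ 2 * k) (hR : R.totalDegree ≤ 2 * l) :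
    (P * R).totalDegree ≤ 2 * (k + l) :=
  (totalDegree_mul _ _).trans (by omega)

/-- The monomial spelled by a word in the letters `1` (encoded by `none`) and `X i`. -/
noncomputable def wordMonomial {N : ℕ} (w : Fin N → Option σ) : MvPolynomial σ ℝ :=
  ∏ k, (w k).elim 1 X

theorem totalDegree_wordMonomial_le {N : ℕ} (w : Fin N → Option σ) :
    (wordMonomial w).totalDegree ≤ N := by
  refine (totalDegree_finsetProd _ _).trans ((Finset.sum_le_card_nsmul _ _ 1 fun k _ => ?_).trans
    (by simp))
  cases w k <;> simp

theorem exists_wordMonomial_eq {N : ℕ} {d : σ →₀ ℕ} (hd : d.degree ≤ N) :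
    ∃ w : Fin N → Option σ, wordMonomial w = monomial d 1 := by
  induction N generalizing d with
  | zero =>
    obtain rfl : d = 0 := (Finsupp.degree_eq_zero_iff d).1 (Nat.le_zero.1 hd)
    exact ⟨fun _ => none, by simp [wordMonomial]⟩
  | succ N ih =>
    obtain rfl | ⟨i, hi⟩ := eq_or_ne d 0 |>.imp_right Finsupp.ne_iff.1
    · exact ⟨fun _ => none, by simp [wordMonomial]⟩
    obtain ⟨d, rfl⟩ := exists_add_of_le (Finsupp.single_le_iff.2 (Nat.one_le_iff_ne_zero.2 hi))
    rw [map_add, Finsupp.degree_single] at hd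
    obtain ⟨w, hw⟩ := ih (d := d) (by omega)
    refine ⟨Fin.cons (some i) w, ?_⟩
    rw [wordMonomial, Fin.prod_univ_succ]
    simp only [Fin.cons_zero, Fin.cons_succ, Option.elim_some]
    rw [← wordMonomial, hw, X, monomial_mul, one_mul]

variable [Fintype σ]

variable (σ) in
/-- The polynomial `θ = 1 + ‖x‖²`. -/
noncomputable def thetaPoly : MvPolynomial σ ℝ := 1 + ∑ i, X i ^ 2

theorem eval_thetaPoly_pos (x : σ → ℝ) : 0 < eval x (thetaPoly σ) := by
  simp only [thetaPoly, map_add, map_one, map_sum, map_pow, eval_X]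
  positivity

theorem eval_thetaPoly_pow_ne_zero (x : σ → ℝ) (k : ℕ) : eval x (thetaPoly σ) ^ k ≠ 0 :=
  (pow_pos (eval_thetaPoly_pos x) k).ne'

theorem totalDegree_thetaPoly_pow_le (k : ℕ) : (thetaPoly σ ^ k).totalDegree ≤ 2 * k := by
  have h : (thetaPoly σ).totalDegree ≤ 2 := (totalDegree_add _ _).trans <| max_le (by simp) <|
    totalDegree_finsetSum_le fun i _ => (totalDegree_pow _ _).trans (by simp)
  exact (totalDegree_pow _ _).trans (by rw [mul_comm]; gcongr)

variable (σ) in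
/-- The algebra of the bounded rational functions `P / θ ^ k` with `deg P ≤ 2 * k`. -/
def boundedFractions : Subalgebra ℝ ((σ → ℝ) → ℝ) where
  carrier := {f | ∃ (k : ℕ) (P : MvPolynomial σ ℝ), P.totalDegree ≤ 2 * k ∧
    ∀ x, f x * eval x (thetaPoly σ) ^ k = eval x P}
  mul_mem' := by
    rintro f g ⟨k, P, hP, hf⟩ ⟨l, R, hR, hg⟩
    refine ⟨k + l, P * R, totalDegree_mul_le_two_mul_add hP hR, fun x => ?_⟩
    rw [map_mul, ← hf, ← hg, Pi.mul_apply]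
    ring
  add_mem' := by
    rintro f g ⟨k, P, hP, hf⟩ ⟨l, R, hR, hg⟩
    refine ⟨k + l, P * thetaPoly σ ^ l + thetaPoly σ ^ k * R,
      (totalDegree_add _ _).trans (max_le ?_ ?_), fun x => ?_⟩
    · exact totalDegree_mul_le_two_mul_add hP (totalDegree_thetaPoly_pow_le l)
    · exact totalDegree_mul_le_two_mul_add (totalDegree_thetaPoly_pow_le k) hR
    · rw [map_add, map_mul, map_mul, map_pow, map_pow, ← hf, ← hg, Pi.add_apply]
      ring
  algebraMap_mem' r := ⟨0, C r, by simp, fun x => by simp⟩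

/-- The fraction `P / θ ^ N`. -/
noncomputable def frac (P : MvPolynomial σ ℝ) (N : ℕ) (h : P.totalDegree ≤ 2 * N) :
    boundedFractions σ :=
  ⟨fun x => eval x P / eval x (thetaPoly σ) ^ N, N, P, h, fun x =>
    div_mul_cancel₀ _ (eval_thetaPoly_pow_ne_zero x N)⟩

theorem frac_apply (P : MvPolynomial σ ℝ) (N : ℕ) (h : P.totalDegree ≤ 2 * N) (x : σ → ℝ) :
    (frac P N h).1 x = eval x P / eval x (thetaPoly σ) ^ N := rfl

theorem exists_eq_frac (a : boundedFractions σ) : ∃ P N h, a = frac P N h := by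
  obtain ⟨f, k, P, hP, hf⟩ := a
  exact ⟨P, k, hP, Subtype.ext <| funext fun x =>
    eq_div_of_mul_eq (eval_thetaPoly_pow_ne_zero x k) (hf x)⟩

theorem frac_congr {P R : MvPolynomial σ ℝ} {N K : ℕ} (hP : P.totalDegree ≤ 2 * N)
    (hR : R.totalDegree ≤ 2 * K) (h : P * thetaPoly σ ^ K = R * thetaPoly σ ^ N) :
    frac P N hP = frac R K hR := by
  refine Subtype.ext <| funext fun x => ?_
  rw [frac_apply, frac_apply, div_eq_div_iff (eval_thetaPoly_pow_ne_zero x N)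
    (eval_thetaPoly_pow_ne_zero x K), ← map_pow, ← map_pow, ← map_mul, ← map_mul, h]

theorem frac_mul {P R : MvPolynomial σ ℝ} {N K : ℕ} (hP : P.totalDegree ≤ 2 * N)
    (hR : R.totalDegree ≤ 2 * K) :
    frac P N hP * frac R K hR = frac (P * R) (N + K) (totalDegree_mul_le_two_mul_add hP hR) := by
  refine Subtype.ext <| funext fun x => ?_
  change (frac P N hP).1 x * (frac R K hR).1 x = _
  rw [frac_apply, frac_apply, frac_apply, map_mul, pow_add, div_mul_div_comm]

theorem frac_sum {ι : Type*} {s : Finset ι} {P : ι → MvPolynomial σ ℝ} {N : ℕ}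
    (h : ∀ i, (P i).totalDegree ≤ 2 * N) :
    ∑ i ∈ s, frac (P i) N (h i) =
      frac (∑ i ∈ s, P i) N (totalDegree_finsetSum_le fun i _ => h i) := by
  refine Subtype.ext <| funext fun x => ?_
  simp only [AddSubmonoidClass.coe_finsetSum, Finset.sum_apply, frac_apply, map_sum,
    Finset.sum_div]

theorem frac_add {P R : MvPolynomial σ ℝ} {N : ℕ} (hP : P.totalDegree ≤ 2 * N)
    (hR : R.totalDegree ≤ 2 * N) :
    frac P N hP + frac R N hR =
      frac (P + R) N ((totalDegree_add _ _).trans (max_le hP hR)) := by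
  refine Subtype.ext <| funext fun x => ?_
  change (frac P N hP).1 x + (frac R N hR).1 x = _
  rw [frac_apply, frac_apply, frac_apply, map_add, add_div]

theorem frac_thetaPoly_pow (N : ℕ) :
    frac (thetaPoly σ ^ N) N (totalDegree_thetaPoly_pow_le N) = 1 :=
  Subtype.ext <| funext fun x => by
    rw [frac_apply, map_pow]
    exact div_self (eval_thetaPoly_pow_ne_zero x N)

theorem smul_frac (c : ℝ) {P : MvPolynomial σ ℝ} {N : ℕ} (hP : P.totalDegree ≤ 2 * N) :
    c • frac P N hP = frac (c • P) N ((totalDegree_smul_le _ _).trans hP) :=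
  Subtype.ext <| funext fun x => by
    change c * (frac P N hP).1 x = _
    rw [frac_apply, frac_apply, smul_eval, mul_div_assoc]

theorem frac_mem_of_monomial {S : Submodule ℝ (boundedFractions σ)} {N : ℕ}
    (hS : ∀ (d : σ →₀ ℕ) (h : (monomial d (1 : ℝ)).totalDegree ≤ 2 * N),
      frac (monomial d 1) N h ∈ S) {P : MvPolynomial σ ℝ} (hP : P.totalDegree ≤ 2 * N) :
    frac P N hP ∈ S := by
  have hmon (d : P.support) : (monomial d.1 (1 : ℝ)).totalDegree ≤ 2 * N :=
    (totalDegree_monomial_le _ _).trans ((le_totalDegree d.2).trans hP)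
  have hsum : frac P N hP = ∑ d : P.support, P.coeff d • frac (monomial d.1 1) N (hmon d) := by
    simp only [smul_frac, frac_sum]
    refine frac_congr _ _ (congrArg (· * _) ?_)
    simpa [smul_monomial] using P.as_sum.trans (Finset.sum_coe_sort _ _).symm
  exact hsum ▸ S.sum_mem fun d _ => S.smul_mem _ (hS _ _)

theorem thetaPoly_pow_eq_sum (N : ℕ) :
    thetaPoly σ ^ N = ∑ w : Fin N → Option σ, wordMonomial w * wordMonomial w := by
  have h : thetaPoly σ = ∑ o : Option σ, o.elim 1 X * o.elim 1 X := by
    simp [thetaPoly, Fintype.sum_option, sq]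
  simp only [h, Fintype.sum_pow, wordMonomial, Finset.prod_mul_distrib]

theorem isSumSq_thetaPoly_pow (N : ℕ) : IsSumSq (thetaPoly σ ^ N) :=
  thetaPoly_pow_eq_sum (σ := σ) N ▸ IsSumSq.sum_mul_self _ _

theorem isSumSq_one_sub_frac_wordMonomial (k : ℕ) (w : Fin (2 * k) → Option σ) :
    IsSumSq (1 - frac (wordMonomial w) k (totalDegree_wordMonomial_le w) *
      frac (wordMonomial w) k (totalDegree_wordMonomial_le w)) := by
  classical
  have hone : (1 : boundedFractions σ) = ∑ w : Fin (2 * k) → Option σ,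
      frac (wordMonomial w) k (totalDegree_wordMonomial_le w) *
        frac (wordMonomial w) k (totalDegree_wordMonomial_le w) := by
    simp only [frac_mul, frac_sum, ← thetaPoly_pow_eq_sum, ← two_mul]
    exact (frac_thetaPoly_pow (2 * k)).symm
  rw [hone, ← Finset.sum_erase_eq_sub (mem_univ w)]
  exact IsSumSq.sum_mul_self _ _

theorem mem_sosBounded (a : boundedFractions σ) : a ∈ sosBounded (boundedFractions σ) := by
  obtain ⟨P, N, hP, rfl⟩ := exists_eq_frac a
  refine frac_mem_of_monomial (fun d hd => mem_sosBounded_of_isSumSq_one_sub_mul_self ?_) hP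
  rw [totalDegree_monomial _ one_ne_zero] at hd
  obtain ⟨w, hw⟩ := exists_wordMonomial_eq hd
  simpa only [hw] using isSumSq_one_sub_frac_wordMonomial N w

section Characters

variable (σ) in
/-- The function `1 / θ`. -/
noncomputable def invTheta : boundedFractions σ := frac 1 1 (by simp)

theorem frac_one_eq_invTheta_pow (K : ℕ) : frac (1 : MvPolynomial σ ℝ) K (by simp) =
    invTheta σ ^ K :=
  Subtype.ext <| funext fun x => by
    change _ = (invTheta σ).1 x ^ K
    simp [frac_apply, invTheta]

theorem isSumSq_invTheta : IsSumSq (invTheta σ) := by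
  have h : invTheta σ = ∑ w : Fin 1 → Option σ,
      frac (wordMonomial w) 1 ((totalDegree_wordMonomial_le w).trans one_le_two) *
        frac (wordMonomial w) 1 ((totalDegree_wordMonomial_le w).trans one_le_two) := by
    simp only [frac_mul, frac_sum, ← thetaPoly_pow_eq_sum]
    exact frac_congr _ _ (by ring)
  exact h ▸ IsSumSq.sum_mul_self _ _

variable (χ : boundedFractions σ →ₐ[ℝ] ℝ)

theorem character_nonneg {a : boundedFractions σ} (ha : IsSumSq a) : 0 ≤ χ a :=
  (isSumSq_map χ ha).nonneg

/-- The point of `ℝ^σ` represented by a character of the bounded fractions: `X i` is the quotient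
of `X i / θ` by `1 / θ`. A character killing `1 / θ` is a point at infinity, and the value is
then junk. -/
noncomputable def characterPoint : σ → ℝ := fun i => χ (frac (X i) 1 (by simp)) / χ (invTheta σ)

variable {χ}

theorem eventually_character_frac_eq (hχ : χ (invTheta σ) ≠ 0) (P : MvPolynomial σ ℝ) :
    ∀ᶠ K in Filter.atTop, ∀ h : P.totalDegree ≤ 2 * K,
      χ (frac P K h) = eval (characterPoint χ) P * χ (invTheta σ) ^ K := by
  induction P using MvPolynomial.induction_on with
  | C a =>
    refine .of_forall fun K h => ?_
    rw [eval_C, ← map_pow, ← frac_one_eq_invTheta_pow, ← smul_eq_mul, ← map_smul, smul_frac]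
    exact congrArg χ (frac_congr _ _ (by rw [smul_eq_C_mul, mul_one]))
  | add P R hP hR =>
    filter_upwards [hP, hR, Filter.eventually_ge_atTop P.totalDegree,
      Filter.eventually_ge_atTop R.totalDegree] with K hPK hRK hPdeg hRdeg h
    rw [← frac_add (by omega) (by omega), map_add, hPK, hRK, map_add, add_mul]
  | mul_X P i hP =>
    rw [← Filter.map_add_atTop_eq_nat 1, Filter.eventually_map]
    filter_upwards [hP, Filter.eventually_ge_atTop P.totalDegree] with K hPK hPdeg h
    rw [← frac_mul (K := 1) (by omega) (by simp), map_mul, hPK, map_mul, eval_X, characterPoint]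
    field_simp
    ring

theorem character_frac_eq (hχ : χ (invTheta σ) ≠ 0) {P : MvPolynomial σ ℝ} {N : ℕ}
    (h : P.totalDegree ≤ 2 * N) :
    χ (frac P N h) = eval (characterPoint χ) P * χ (invTheta σ) ^ N := by
  obtain ⟨K, hK, hNK⟩ :=
    ((eventually_character_frac_eq hχ P).and (Filter.eventually_ge_atTop N)).exists
  obtain ⟨K, rfl⟩ := exists_add_of_le hNK
  have hcongr : frac P (N + K) (by omega) = frac P N h * invTheta σ ^ K := by
    rw [← frac_one_eq_invTheta_pow, frac_mul]
    exact frac_congr _ _ (by rw [mul_one])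
  have hval := hK (by omega)
  rw [hcongr, map_mul, map_pow, pow_add, ← mul_assoc] at hval
  exact mul_right_cancel₀ (pow_ne_zero _ hχ) hval

-- `(P / θ ^ N)² = 1 / θ * (P² / θ ^ (2 N - 1))`
theorem character_frac_eq_zero (hχ : χ (invTheta σ) = 0) {P : MvPolynomial σ ℝ} {N : ℕ}
    (h : P.totalDegree < 2 * N) : χ (frac P N h.le) = 0 := by
  have hPP : (P * P).totalDegree ≤ 2 * (2 * N - 1) := (totalDegree_mul _ _).trans (by omega)
  have hsq : frac P N h.le * frac P N h.le = invTheta σ * frac (P * P) (2 * N - 1) hPP := by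
    rw [invTheta, frac_mul, frac_mul]
    refine frac_congr _ _ ?_
    rw [one_mul, show 1 + (2 * N - 1) = N + N by omega]
  refine mul_self_eq_zero.1 ?_
  rw [← map_mul, hsq, map_mul, hχ, zero_mul]

end Characters

end BoundedFractions

/-! ### Quadratic modules of matrices -/

section QuadraticModules

variable {A ι : Type*} [CommRing A] [Algebra ℝ A]

/-- A quadratic module of matrices over an `ℝ`-algebra `A`: a cone that contains the real positive
semidefinite matrices and is stable under multiplication by sums of squares of `A`. -/
structure IsQuadraticModule (Q : PointedCone ℝ (Matrix ι ι A)) : Prop where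
  map_algebraMap_mem {B : Matrix ι ι ℝ} : B.PosSemidef → B.map (algebraMap ℝ A) ∈ Q
  isSumSq_smul_mem {a : A} {M : Matrix ι ι A} : IsSumSq a → M ∈ Q → a • M ∈ Q

variable (A ι) in
/-- The symmetrization `M ↦ M + Mᵀ`. -/
def symmetrize : Matrix ι ι A →ₗ[ℝ] Matrix ι ι A :=
  .id + (transposeLinearEquiv ι ι ℝ A).toLinearMap

theorem symmetrize_apply (M : Matrix ι ι A) : symmetrize A ι M = M + Mᵀ := rfl

variable {Q : PointedCone ℝ (Matrix ι ι A)} {M : Matrix ι ι A}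

theorem mem_comap_symmetrize_iff (hM : M.IsSymm) : M ∈ Q.comap (symmetrize A ι) ↔ M ∈ Q := by
  rw [PointedCone.mem_comap, symmetrize_apply, hM, ← two_smul ℝ, Q.smul_mem_iff two_pos]

theorem IsQuadraticModule.exists_smul_add_smul_mem (hQ : IsQuadraticModule Q) {a : A}
    (ha : a ∈ sosBounded A) :
    ∃ c : ℝ, ∀ M ∈ Q.comap (symmetrize A ι), c • M + a • M ∈ Q.comap (symmetrize A ι) := by
  obtain ⟨c, hc, -⟩ := ha
  refine ⟨c, fun M hM => ?_⟩
  rw [PointedCone.mem_comap, symmetrize_apply] at hM ⊢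
  convert hQ.isSumSq_smul_mem hc hM using 1
  rw [add_smul, algebraMap_smul, transpose_add, transpose_smul, transpose_smul]
  module

theorem linearMap_eq_map_character [Finite ι] {L : Matrix ι ι A →ₗ[ℝ] ℝ} {χ : A →ₐ[ℝ] ℝ}
    (hL : ∀ a M, L (a • M) = χ a * L M) (M : Matrix ι ι A) :
    L M = L ((M.map χ).map (algebraMap ℝ A)) := by
  classical
  cases nonempty_fintype ι
  have hsingle (a : A) (i j : ι) : L (single i j a) = χ a * L (single i j 1) := by
    rw [← hL, smul_single, smul_eq_mul, mul_one]
  rw [matrix_eq_sum_single M, matrix_eq_sum_single ((Matrix.map _ _).map _)]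
  simp only [map_sum, Matrix.map_apply]
  refine Finset.sum_congr rfl fun i _ => Finset.sum_congr rfl fun j _ => ?_
  simp [← matrix_eq_sum_single, hsingle (M i j), hsingle (algebraMap ℝ A _)]

variable [DecidableEq ι]

theorem vecMulVec_single_add_single (i j : ι) :
    vecMulVec (Pi.single i 1 + Pi.single j 1 : ι → ℝ) (star (Pi.single i 1 + Pi.single j 1)) =
      single i i 1 + single j j 1 + (single i j 1 + single j i 1) := by
  simp only [star_trivial, add_vecMulVec, vecMulVec_add, ← single_eq_single_vecMulVec_single]
  abel

theorem vecMulVec_single_sub_single (i j : ι) :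
    vecMulVec (Pi.single i 1 - Pi.single j 1 : ι → ℝ) (star (Pi.single i 1 - Pi.single j 1)) =
      single i i 1 + single j j 1 - (single i j 1 + single j i 1) := by
  simp only [star_trivial, sub_vecMulVec, vecMulVec_sub, ← single_eq_single_vecMulVec_single]
  abel

theorem posSemidef_one_sub_single [Finite ι] (i : ι) :
    (1 - single i i 1 : Matrix ι ι ℝ).PosSemidef := by
  rw [← diagonal_one, ← diagonal_single, diagonal_sub]
  refine .diagonal fun j => ?_
  by_cases h : j = i <;> simp [h]

namespace IsQuadraticModule

theorem one_mem (hQ : IsQuadraticModule Q) : 1 ∈ Q := by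
  simpa using hQ.map_algebraMap_mem PosSemidef.one

variable [Finite ι]

-- `(c ∓ a) (eᵢ ± eⱼ) (eᵢ ± eⱼ)ᵀ` are in `Q`, and so are `2 c (1 - Eᵢᵢ)` and `2 c (1 - Eⱼⱼ)`.
theorem exists_smul_one_sub_single_mem (hQ : IsQuadraticModule Q) {a : A} (ha : a ∈ sosBounded A)
    (i j : ι) : ∃ c : ℝ, c • (1 : Matrix ι ι A) - (single i j a + single j i a) ∈ Q := by
  obtain ⟨c, hadd, hsub⟩ := ha
  have hplus := hQ.isSumSq_smul_mem hsub <| hQ.map_algebraMap_mem <|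
    posSemidef_vecMulVec_self_star (Pi.single i 1 + Pi.single j 1)
  have hminus := hQ.isSumSq_smul_mem hadd <| hQ.map_algebraMap_mem <|
    posSemidef_vecMulVec_self_star (Pi.single i 1 - Pi.single j 1)
  have hdiag (k : ι) := hQ.isSumSq_smul_mem (hadd.add hsub) <| hQ.map_algebraMap_mem <|
    posSemidef_one_sub_single k
  rw [vecMulVec_single_add_single] at hplus
  rw [vecMulVec_single_sub_single] at hminus
  refine ⟨c + c, (Q.smul_mem_iff (two_pos (α := ℝ))).1 ?_⟩
  rw [two_smul]
  convert add_mem (add_mem hplus hminus) (add_mem (hdiag i) (hdiag j)) using 1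
  have hscale (k l : ι) : single k l a = a • single k l 1 := by simp
  rw [hscale i j, hscale j i]
  simp only [Matrix.map_add _ (map_add (algebraMap ℝ A)),
    Matrix.map_sub _ (map_sub (algebraMap ℝ A)), map_single _ _ _ (algebraMap ℝ A), map_one,
    Matrix.map_one _ (map_zero (algebraMap ℝ A)) (map_one _)]
  module

theorem isOrderUnit_comap_symmetrize (hQ : IsQuadraticModule Q) (hA : ∀ a : A, a ∈ sosBounded A) :
    IsOrderUnit (Q.comap (symmetrize A ι)) 1 where
  mem := (mem_comap_symmetrize_iff isSymm_one).2 hQ.one_mem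
  exists_smul_sub_mem M := by
    cases nonempty_fintype ι
    choose c hc using fun i j => hQ.exists_smul_one_sub_single_mem (hA (M i j)) i j
    refine ⟨∑ i, ∑ j, c i j / 2, ?_⟩
    rw [PointedCone.mem_comap]
    convert Q.sum_mem (t := univ) fun i _ => Q.sum_mem (t := univ) fun j _ => hc i j using 1
    conv_lhs => rw [matrix_eq_sum_single M]
    simp only [Finset.sum_smul, ← Finset.sum_sub_distrib, map_sum]
    refine Finset.sum_congr rfl fun i _ => Finset.sum_congr rfl fun j _ => ?_
    rw [symmetrize_apply, transpose_sub, transpose_smul, transpose_one, transpose_single]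
    module

theorem add_smul_one_mem (hQ : IsQuadraticModule Q) (hA : ∀ a : A, a ∈ sosBounded A)
    (hM : M.IsSymm) (hpsd : ∀ χ : A →ₐ[ℝ] ℝ, (∀ a : A, a • (1 : Matrix ι ι A) ∈ Q → 0 ≤ χ a) →
      (M.map χ).PosSemidef) {ε : ℝ} (hε : 0 < ε) : M + ε • 1 ∈ Q := by
  refine (mem_comap_symmetrize_iff (hM.add (isSymm_one.smul ε))).1 (by_contra fun hmem => ?_)
  obtain ⟨L, χ, hLQ, hLone, hLv, hLmul⟩ := (hQ.isOrderUnit_comap_symmetrize hA).exists_pure_state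
    (fun a => hQ.exists_smul_add_smul_mem (hA a)) hmem
  have hχ (a : A) (ha : a • (1 : Matrix ι ι A) ∈ Q) : 0 ≤ χ a := by
    simpa [hLmul, hLone] using hLQ _ ((mem_comap_symmetrize_iff (isSymm_one.smul a)).2 ha)
  have hLM : 0 ≤ L M := by
    rw [linearMap_eq_map_character hLmul]
    exact hLQ _ ((mem_comap_symmetrize_iff ((hM.map _).map _)).2
      (hQ.map_algebraMap_mem (hpsd χ hχ)))
  rw [map_add, map_smul, hLone, smul_eq_mul, mul_one] at hLv
  linarith

end IsQuadraticModule

end QuadraticModules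

/-! ### Sums of squares with integrated multipliers -/

section SOSMatrices

variable {σ ι κ : Type*} [Fintype ι] {M M' : Matrix ι ι (MvPolynomial σ ℝ)}

theorem isSOSMatrix_transpose_mul_self [Fintype κ] (T : Matrix κ ι (MvPolynomial σ ℝ)) :
    IsSOSMatrix (Tᵀ * T) :=
  ⟨Fintype.card κ, T.submatrix (Fintype.equivFin κ).symm id, by
    rw [transpose_submatrix, submatrix_mul_equiv, submatrix_id_id]⟩

theorem isSOSMatrix_zero : IsSOSMatrix (0 : Matrix ι ι (MvPolynomial σ ℝ)) :=
  ⟨0, 0, by simp⟩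

theorem IsSOSMatrix.add (hM : IsSOSMatrix M) (hM' : IsSOSMatrix M') : IsSOSMatrix (M + M') := by
  obtain ⟨l, T, rfl⟩ := hM
  obtain ⟨l', T', rfl⟩ := hM'
  rw [← fromCols_mul_fromRows, ← transpose_fromRows]
  exact isSOSMatrix_transpose_mul_self _

theorem IsSOSMatrix.isSumSq_smul (hM : IsSOSMatrix M) {f : MvPolynomial σ ℝ} (hf : IsSumSq f) :
    IsSOSMatrix (f • M) := by
  induction hf with
  | zero => rw [zero_smul]; exact isSOSMatrix_zero
  | sq_add a _ ih =>
    rw [add_smul]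
    refine IsSOSMatrix.add ?_ ih
    obtain ⟨l, T, rfl⟩ := hM
    exact ⟨l, a • T, by rw [transpose_smul, Matrix.smul_mul, Matrix.mul_smul, smul_smul]⟩

theorem isSOSMatrix_map_C {B : Matrix ι ι ℝ} (hB : B.PosSemidef) :
    IsSOSMatrix (B.map (C : ℝ → MvPolynomial σ ℝ)) := by
  obtain ⟨l, v, rfl⟩ := posSemidef_iff_eq_sum_vecMulVec.1 hB
  refine ⟨l, (Matrix.of v).map C, ?_⟩
  ext1 i j
  simp [Matrix.mul_apply, Matrix.sum_apply, vecMulVec_apply]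

theorem matDeg_le_iff {k : ℕ} : matDeg M ≤ k ↔ ∀ i j, (M i j).totalDegree ≤ k := by
  simp [matDeg, Finset.sup_le_iff]

end SOSMatrices

section DegreeInX

variable {n m k l : ℕ} {q r : MvPolynomial (Fin n ⊕ Fin m) ℝ}

theorem matDegX_le_iff {ι : Type*} [Fintype ι]
    {M : Matrix ι ι (MvPolynomial (Fin n ⊕ Fin m) ℝ)} :
    matDegX M ≤ k ↔ ∀ i j, degX (M i j) ≤ k := by
  simp [matDegX, Finset.sup_le_iff]

theorem degX_le_iff : degX q ≤ k ↔ ∀ d ∈ q.support, ∑ i : Fin n, d (Sum.inl i) ≤ k := by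
  simp only [degX, Finset.sup_le_iff]

theorem degX_zero : degX (0 : MvPolynomial (Fin n ⊕ Fin m) ℝ) = 0 := by simp [degX]

theorem degX_add_le (hq : degX q ≤ k) (hr : degX r ≤ k) : degX (q + r) ≤ k := by
  classical
  rw [degX_le_iff] at *
  intro d hd
  rcases Finset.mem_union.1 (support_add hd) with h | h
  exacts [hq d h, hr d h]

theorem degX_sum_le {ι : Type*} {s : Finset ι} {q : ι → MvPolynomial (Fin n ⊕ Fin m) ℝ}
    (hq : ∀ i ∈ s, degX (q i) ≤ k) : degX (∑ i ∈ s, q i) ≤ k :=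
  Finset.sum_induction _ (degX · ≤ k) (fun _ _ => degX_add_le) (by simp [degX_zero]) hq

theorem degX_mul_le (hq : degX q ≤ k) (hr : degX r ≤ l) : degX (q * r) ≤ k + l := by
  classical
  rw [degX_le_iff] at *
  intro d hd
  obtain ⟨a, ha, b, hb, rfl⟩ := Finset.mem_add.1 (support_mul _ _ hd)
  simp only [Finsupp.add_apply, Finset.sum_add_distrib]
  exact add_le_add (hq a ha) (hr b hb)

theorem degX_rename_inl_le (P : MvPolynomial (Fin n) ℝ) :
    degX (rename (Sum.inl : Fin n → Fin n ⊕ Fin m) P) ≤ P.totalDegree := by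
  classical
  rw [degX_le_iff, support_rename_of_injective Sum.inl_injective]
  intro d hd
  obtain ⟨e, he, rfl⟩ := Finset.mem_image.1 hd
  refine le_trans (le_of_eq ?_) (le_totalDegree he)
  rw [Finsupp.sum_fintype _ _ (fun _ => rfl)]
  exact Finset.sum_congr rfl fun i _ => Finsupp.mapDomain_apply Sum.inl_injective _ _

theorem degX_rename_inr (h : MvPolynomial (Fin m) ℝ) :
    degX (rename (Sum.inr : Fin m → Fin n ⊕ Fin m) h) = 0 := by
  classical
  rw [← Nat.le_zero, degX_le_iff, support_rename_of_injective Sum.inr_injective]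
  intro d hd
  obtain ⟨e, -, rfl⟩ := Finset.mem_image.1 hd
  exact (Finset.sum_eq_zero fun i _ => Finsupp.mapDomain_of_notMem_range _ _ (by simp)).le

end DegreeInX

section Integration

variable {n m : ℕ} {ν : Measure (Fin m → ℝ)}

theorem totalDegree_integY_le (ν : Measure (Fin m → ℝ)) (q : MvPolynomial (Fin n ⊕ Fin m) ℝ) :
    (integY ν q).totalDegree ≤ degX q := by
  refine totalDegree_finsetSum_le fun d hd => (totalDegree_monomial_le _ _).trans ?_
  refine le_trans (le_of_eq ?_) (degX_le_iff.1 le_rfl d hd)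
  rw [Finsupp.sum_fintype _ _ (fun _ => rfl)]
  rfl

theorem integY_eq_sum_of_support_subset {q : MvPolynomial (Fin n ⊕ Fin m) ℝ}
    {s : Finset ((Fin n ⊕ Fin m) →₀ ℕ)} (hs : q.support ⊆ s) :
    integY ν q = ∑ d ∈ s, monomial (xPart d) (q.coeff d * ∫ y, ∏ j, y j ^ d (Sum.inr j) ∂ν) :=
  Finset.sum_subset hs fun d _ hd => by rw [notMem_support_iff.1 hd, zero_mul, monomial_zero]

theorem integY_zero : integY ν (0 : MvPolynomial (Fin n ⊕ Fin m) ℝ) = 0 := by simp [integY]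

theorem integY_add (q r : MvPolynomial (Fin n ⊕ Fin m) ℝ) :
    integY ν (q + r) = integY ν q + integY ν r := by
  classical
  rw [integY_eq_sum_of_support_subset support_add,
    integY_eq_sum_of_support_subset subset_union_left,
    integY_eq_sum_of_support_subset (q := r) subset_union_right, ← Finset.sum_add_distrib]
  simp only [coeff_add, add_mul, map_add]

theorem integY_monomial (d : (Fin n ⊕ Fin m) →₀ ℕ) (a : ℝ) :
    integY ν (monomial d a) = monomial (xPart d) (a * ∫ y, ∏ j, y j ^ d (Sum.inr j) ∂ν) := by
  classical
  rw [integY_eq_sum_of_support_subset support_monomial_subset, Finset.sum_singleton,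
    coeff_monomial, if_pos rfl]

theorem integY_rename_inl_mul (f : MvPolynomial (Fin n) ℝ)
    (q : MvPolynomial (Fin n ⊕ Fin m) ℝ) :
    integY ν (rename Sum.inl f * q) = f * integY ν q := by
  induction f using MvPolynomial.induction_on' with
  | add f g hf hg => rw [map_add, add_mul, integY_add, hf, hg, add_mul]
  | monomial e a =>
    induction q using MvPolynomial.induction_on' with
    | add q r hq hr => rw [mul_add, integY_add, hq, hr, integY_add, mul_add]
    | monomial d b =>
      have hx : xPart (e.mapDomain (Sum.inl : Fin n → Fin n ⊕ Fin m) + d) = e + xPart d := by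
        ext i
        simp [xPart, Finsupp.mapDomain_apply Sum.inl_injective]
      have hy (j : Fin m) :
          (e.mapDomain (Sum.inl : Fin n → Fin n ⊕ Fin m) + d) (Sum.inr j) = d (Sum.inr j) := by
        simp [Finsupp.mapDomain_of_notMem_range]
      rw [rename_monomial, monomial_mul, integY_monomial, integY_monomial, monomial_mul, hx]
      simp only [hy, mul_assoc]

/-- The polynomial `q(x, ·)` in `y`. -/
noncomputable def evalX (x : Fin n → ℝ) :
    MvPolynomial (Fin n ⊕ Fin m) ℝ →ₐ[ℝ] MvPolynomial (Fin m) ℝ :=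
  aeval (Sum.elim (fun i => C (x i)) X)

theorem eval_evalX (x : Fin n → ℝ) (y : Fin m → ℝ) (q : MvPolynomial (Fin n ⊕ Fin m) ℝ) :
    eval y (evalX x q) = eval (Sum.elim x y) q := by
  have h : (aeval y : MvPolynomial (Fin m) ℝ →ₐ[ℝ] ℝ).comp (evalX x) = aeval (Sum.elim x y) :=
    algHom_ext fun i => by cases i <;> simp [evalX]
  exact DFunLike.congr_fun h q

theorem eval_integY (hmom : momentsFinite ν) (q : MvPolynomial (Fin n ⊕ Fin m) ℝ)
    (x : Fin n → ℝ) : eval x (integY ν q) = ∫ y, eval y (evalX x q) ∂ν := by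
  induction q using MvPolynomial.induction_on' with
  | add q r hq hr =>
    simp only [integY_add, map_add, hq, hr]
    exact (integral_add (hmom.integrable _) (hmom.integrable _)).symm
  | monomial d a =>
    simp only [integY_monomial, eval_evalX, eval_monomial, Finsupp.prod_fintype, pow_zero,
      implies_true, Fintype.prod_sum_type, Sum.elim_inl, Sum.elim_inr, ← mul_assoc]
    rw [integral_const_mul, mul_right_comm]
    rfl

end Integration

section Representations

variable {ι κ : Type*} [Fintype κ]

theorem lram_add {R : Type*} [CommSemiring R] (A A' : Matrix (ι × κ) (ι × κ) R)
    (B : Matrix κ κ R) : lram (A + A') B = lram A B + lram A' B := by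
  ext i j
  simp [lram, add_mul, Finset.sum_add_distrib]

theorem lram_smul {R : Type*} [CommSemiring R] (r : R) (A : Matrix (ι × κ) (ι × κ) R)
    (B : Matrix κ κ R) : lram (r • A) B = r • lram A B := by
  ext i j
  simp [lram, Finset.mul_sum, mul_assoc]

variable [Fintype ι] {n m a b k : ℕ} {ν : Measure (Fin m → ℝ)}
  {G : Matrix κ κ (MvPolynomial (Fin n ⊕ Fin m) ℝ)}
  {H H' : Matrix ι ι (MvPolynomial (Fin n) ℝ)}

/-- `H = S + ∫ ⟨T, G⟩ dν` for SOS matrices `S(x)` and `T(x, y)` with `deg S ≤ a`, `deg_x T ≤ b`. -/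
def HasSOSRep (ν : Measure (Fin m → ℝ)) (G : Matrix κ κ (MvPolynomial (Fin n ⊕ Fin m) ℝ))
    (a b : ℕ) (H : Matrix ι ι (MvPolynomial (Fin n) ℝ)) : Prop :=
  ∃ (S : Matrix ι ι (MvPolynomial (Fin n) ℝ))
    (T : Matrix (ι × κ) (ι × κ) (MvPolynomial (Fin n ⊕ Fin m) ℝ)),
    IsSOSMatrix S ∧ IsSOSMatrix T ∧ matDeg S ≤ a ∧ matDegX T ≤ b ∧
      H = S + (lram T G).map (integY ν)

theorem hasSOSRep_of_isSOSMatrix (hH : IsSOSMatrix H) (hdeg : matDeg H ≤ a) :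
    HasSOSRep ν G a b H :=
  ⟨H, 0, hH, isSOSMatrix_zero, hdeg, matDegX_le_iff.2 fun _ _ => by simp [degX_zero], by
    ext1 i j; simp [lram, integY_zero]⟩

theorem hasSOSRep_map_integY {T : Matrix (ι × κ) (ι × κ) (MvPolynomial (Fin n ⊕ Fin m) ℝ)}
    (hT : IsSOSMatrix T) (hdeg : matDegX T ≤ b) :
    HasSOSRep ν G a b ((lram T G).map (integY ν)) :=
  ⟨0, T, isSOSMatrix_zero, hT, matDeg_le_iff.2 fun _ _ => by simp, hdeg, (zero_add _).symm⟩

theorem HasSOSRep.add (h : HasSOSRep ν G a b H) (h' : HasSOSRep ν G a b H') :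
    HasSOSRep ν G a b (H + H') := by
  obtain ⟨S, T, hS, hT, hSdeg, hTdeg, rfl⟩ := h
  obtain ⟨S', T', hS', hT', hSdeg', hTdeg', rfl⟩ := h'
  refine ⟨S + S', T + T', hS.add hS', hT.add hT', matDeg_le_iff.2 fun i j => ?_,
    matDegX_le_iff.2 fun i j => ?_, ?_⟩
  · exact (totalDegree_add _ _).trans
      (max_le (matDeg_le_iff.1 hSdeg i j) (matDeg_le_iff.1 hSdeg' i j))
  · exact degX_add_le (matDegX_le_iff.1 hTdeg i j) (matDegX_le_iff.1 hTdeg' i j)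
  · rw [lram_add, Matrix.map_add _ integY_add, add_add_add_comm]

theorem HasSOSRep.isSumSq_smul (h : HasSOSRep ν G a b H) {f : MvPolynomial (Fin n) ℝ}
    (hf : IsSumSq f) (hfk : f.totalDegree ≤ k) : HasSOSRep ν G (k + a) (k + b) (f • H) := by
  obtain ⟨S, T, hS, hT, hSdeg, hTdeg, rfl⟩ := h
  refine ⟨f • S, rename Sum.inl f • T, hS.isSumSq_smul hf, hT.isSumSq_smul (isSumSq_map _ hf),
    matDeg_le_iff.2 fun i j => ?_, matDegX_le_iff.2 fun i j => ?_, ?_⟩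
  · exact (totalDegree_mul _ _).trans (add_le_add hfk (matDeg_le_iff.1 hSdeg i j))
  · exact degX_mul_le ((degX_rename_inl_le f).trans hfk) (matDegX_le_iff.1 hTdeg i j)
  · ext1 i j
    simp [lram_smul, integY_rename_inl_mul, mul_add]

end Representations

section IntegratedForm

variable {ι κ : Type*} [Fintype κ] {n m : ℕ} {ν : Measure (Fin m → ℝ)}
  {G : Matrix κ κ (MvPolynomial (Fin n ⊕ Fin m) ℝ)}

/-- The polynomial `∫ h(y)² uᵀ G(x, y) u dν(y)` in `x`. -/
noncomputable def integratedForm (ν : Measure (Fin m → ℝ))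
    (G : Matrix κ κ (MvPolynomial (Fin n ⊕ Fin m) ℝ)) (u : κ → ℝ) (h : MvPolynomial (Fin m) ℝ) :
    MvPolynomial (Fin n) ℝ :=
  integY ν (rename Sum.inr (h ^ 2) * (C ∘ u ⬝ᵥ G *ᵥ (C ∘ u)))

theorem hasSOSRep_integratedForm_smul_one [Fintype ι] [DecidableEq ι] (u : κ → ℝ)
    (h : MvPolynomial (Fin m) ℝ) (a b : ℕ) :
    HasSOSRep ν G a b (integratedForm ν G u h • (1 : Matrix ι ι (MvPolynomial (Fin n) ℝ))) := by
  let T : Matrix ι (ι × κ) (MvPolynomial (Fin n ⊕ Fin m) ℝ) :=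
    .of fun i r => if i = r.1 then rename Sum.inr (C (u r.2) * h) else 0
  have hT (r s : ι × κ) : (Tᵀ * T) r s =
      if r.1 = s.1 then rename Sum.inr (C (u r.2 * u s.2) * h ^ 2) else 0 := by
    simp only [T, Matrix.mul_apply, transpose_apply, of_apply, mul_ite, ite_mul, mul_zero,
      zero_mul, Finset.sum_ite_eq', mem_univ, if_true]
    refine if_congr eq_comm ?_ rfl
    rw [← map_mul, C_mul]
    ring_nf
  have hTdeg : matDegX (Tᵀ * T) ≤ b := matDegX_le_iff.2 fun r s => by
    rw [hT]
    split_ifs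
    · exact (degX_rename_inr _).trans_le b.zero_le
    · exact degX_zero.trans_le b.zero_le
  convert hasSOSRep_map_integY (a := a) (isSOSMatrix_transpose_mul_self T) hTdeg using 1
  ext1 i j
  by_cases hij : i = j
  · subst hij
    simp only [integratedForm, dotProduct, mulVec, Finset.mul_sum, Function.comp_apply,
      Matrix.smul_apply, one_apply_eq, smul_eq_mul, mul_one, map_apply, lram, of_apply, hT, if_true]
    rw [Finset.sum_comm]
    refine congrArg (integY ν) (Finset.sum_congr rfl fun x _ => Finset.sum_congr rfl fun z _ => ?_)
    rw [map_mul, rename_C, C_mul]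
    ring
  · simp [lram, hT, hij, Ne.symm hij, integY_zero]

theorem totalDegree_integratedForm_le {k : ℕ} (hG : matDegX G ≤ k) (u : κ → ℝ)
    (h : MvPolynomial (Fin m) ℝ) : (integratedForm ν G u h).totalDegree ≤ k := by
  have hC (c : ℝ) : degX (C c : MvPolynomial (Fin n ⊕ Fin m) ℝ) ≤ 0 := by
    rw [← rename_C Sum.inr, degX_rename_inr]
  have hform : degX (C ∘ u ⬝ᵥ G *ᵥ (C ∘ u)) ≤ k :=
    degX_sum_le fun i _ => (degX_mul_le (hC _) <| degX_sum_le fun j _ =>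
      degX_mul_le (matDegX_le_iff.1 hG i j) (hC _)).trans (by omega)
  exact (totalDegree_integY_le _ _).trans
    ((degX_mul_le (degX_rename_inr _).le hform).trans (by omega))

theorem eval_integratedForm (hmom : momentsFinite ν) (u : κ → ℝ) (h : MvPolynomial (Fin m) ℝ)
    (x : Fin n → ℝ) : eval x (integratedForm ν G u h) =
      ∫ y, eval y (h ^ 2 * evalX x (C ∘ u ⬝ᵥ G *ᵥ (C ∘ u))) ∂ν := by
  simp only [integratedForm, eval_integY hmom, map_mul, eval_evalX, eval_rename, Sum.elim_comp_inr]

theorem posSemidef_of_integratedForm_nonneg (hcar : Carleman ν) (hmom : momentsFinite ν)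
    (hG : G.IsSymm) {x : Fin n → ℝ} (hx : ∀ u h, 0 ≤ eval x (integratedForm ν G u h))
    {y : Fin m → ℝ} (hy : y ∈ ν.support) : (evalMat (Sum.elim x y) G).PosSemidef := by
  refine .of_dotProduct_mulVec_nonneg (by ext i j; simp [evalMat, hG.apply i j]) fun u => ?_
  have hform := hcar.eval_nonneg_of_mem_support hmom
    (fun h => (hx u h).trans_eq (eval_integratedForm hmom u h x)) hy
  rw [eval_evalX] at hform
  refine hform.trans_eq ?_
  simp [dotProduct, mulVec, evalMat]

end IntegratedForm

/-! ### The Positivstellensatz -/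

section Positivstellensatz

variable {ι κ : Type*} [Fintype ι] [Fintype κ] {n m D k : ℕ} {ν : Measure (Fin m → ℝ)}
  {G : Matrix κ κ (MvPolynomial (Fin n ⊕ Fin m) ℝ)}
  {M M' : Matrix ι ι (boundedFractions (Fin n))}

/-- `M = H / θ ^ (D + k)` for some `H = S + ∫ ⟨T, G⟩ dν` with SOS matrices `S` and `T` such that
`deg S ≤ 2 (D + k)` and `deg_x T ≤ 2 k`. Here `2 D` stands for a bound of `deg_x G`. -/
def HasFractionRep (ν : Measure (Fin m → ℝ)) (G : Matrix κ κ (MvPolynomial (Fin n ⊕ Fin m) ℝ))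
    (D k : ℕ) (M : Matrix ι ι (boundedFractions (Fin n))) : Prop :=
  ∃ H : Matrix ι ι (MvPolynomial (Fin n) ℝ), HasSOSRep ν G (2 * (D + k)) (2 * k) H ∧
    ∀ x i j, (M i j).1 x * eval x (thetaPoly (Fin n)) ^ (D + k) = eval x (H i j)

namespace HasFractionRep

theorem add (h : HasFractionRep ν G D k M) (h' : HasFractionRep ν G D k M') :
    HasFractionRep ν G D k (M + M') := by
  obtain ⟨H, hH, hHM⟩ := h
  obtain ⟨H', hH', hHM'⟩ := h'
  refine ⟨H + H', hH.add hH', fun x i j => ?_⟩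
  rw [Matrix.add_apply, Matrix.add_apply, map_add, ← hHM, ← hHM', ← add_mul]
  rfl

theorem frac_smul (h : HasFractionRep ν G D k M) {f : MvPolynomial (Fin n) ℝ} (hf : IsSumSq f)
    {l : ℕ} (hfl : f.totalDegree ≤ 2 * l) : HasFractionRep ν G D (l + k) (frac f l hfl • M) := by
  obtain ⟨H, hH, hHM⟩ := h
  refine ⟨f • H, ?_, fun x i j => ?_⟩
  · convert hH.isSumSq_smul hf hfl using 1 <;> ring
  · change (frac f l hfl).1 x * (M i j).1 x * _ = _
    rw [frac_apply, Matrix.smul_apply, smul_eq_mul, map_mul, ← hHM, add_left_comm D, pow_add]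
    field_simp [eval_thetaPoly_pow_ne_zero x l]

theorem add_left (h : HasFractionRep ν G D k M) (l : ℕ) : HasFractionRep ν G D (l + k) M := by
  simpa [frac_thetaPoly_pow] using
    h.frac_smul (isSumSq_thetaPoly_pow l) (totalDegree_thetaPoly_pow_le l)

end HasFractionRep

variable (ι D ν G) in
/-- The cone of the matrices of bounded fractions of the form `S + ∫ ⟨T, G⟩ dν`. -/
def sosCone : PointedCone ℝ (Matrix ι ι (boundedFractions (Fin n))) where
  carrier := {M | ∃ k, HasFractionRep ν G D k M}
  zero_mem' := ⟨0, 0, hasSOSRep_of_isSOSMatrix isSOSMatrix_zero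
    (matDeg_le_iff.2 fun _ _ => by simp), fun x i j => by simp⟩
  add_mem' := by
    rintro M M' ⟨k, hM⟩ ⟨l, hM'⟩
    exact ⟨l + k, (hM.add_left l).add (add_comm k l ▸ hM'.add_left k)⟩
  smul_mem' := by
    rintro ⟨c, hc⟩ M ⟨k, hM⟩
    refine ⟨0 + k, ?_⟩
    convert hM.frac_smul (f := C c) (l := 0) (isSumSq_algebraMap hc) (totalDegree_C c).le using 1
    ext i j x
    change c * (M i j).1 x = eval x (C c) / _ * (M i j).1 x
    simp

theorem isQuadraticModule_sosCone : IsQuadraticModule (sosCone ι D ν G) where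
  map_algebraMap_mem {B} hB := by
    refine ⟨0, thetaPoly (Fin n) ^ D • B.map C, hasSOSRep_of_isSOSMatrix
      ((isSOSMatrix_map_C hB).isSumSq_smul (isSumSq_thetaPoly_pow D))
      (matDeg_le_iff.2 fun i j => ?_), fun x i j => ?_⟩
    · refine (totalDegree_mul _ _).trans ?_
      simpa using totalDegree_thetaPoly_pow_le D
    · change B i j * _ = _
      simp [mul_comm]
  isSumSq_smul_mem {a M} ha hM := by
    induction ha with
    | zero => rw [zero_smul]; exact zero_mem _
    | sq_add a _ ih =>
      obtain ⟨P, N, hP, rfl⟩ := exists_eq_frac a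
      obtain ⟨k, hk⟩ := hM
      rw [add_smul, frac_mul]
      exact add_mem ⟨_, hk.frac_smul (IsSumSq.mul_self P) _⟩ ih

theorem frac_integratedForm_smul_one_mem_sosCone [DecidableEq ι] (u : κ → ℝ)
    (h : MvPolynomial (Fin m) ℝ) (hdeg : (integratedForm ν G u h).totalDegree ≤ 2 * D) :
    frac (integratedForm ν G u h) D hdeg • 1 ∈ sosCone ι D ν G := by
  refine ⟨0, _, hasSOSRep_integratedForm_smul_one u h _ _, fun x i j => ?_⟩
  by_cases hij : i = j
  · subst hij
    simp [frac_apply, eval_thetaPoly_pow_ne_zero x D]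
  · simp [hij]

theorem posSemidef_map_character [DecidableEq ι] (hcar : Carleman ν) (hmom : momentsFinite ν)
    (hG : G.IsSymm) (hGD : matDegX G ≤ 2 * D) {F : Matrix ι ι (MvPolynomial (Fin n) ℝ)} {d : ℕ}
    (hFd : ∀ i j, (F i j).totalDegree < 2 * d)
    (hF : ∀ x, (∀ y ∈ ν.support, (evalMat (Sum.elim x y) G).PosSemidef) →
      (evalMat x F).PosSemidef)
    {χ : boundedFractions (Fin n) →ₐ[ℝ] ℝ}
    (hχ : ∀ a, a • (1 : Matrix ι ι (boundedFractions (Fin n))) ∈ sosCone ι D ν G → 0 ≤ χ a) :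
    (Matrix.of fun i j => χ (frac (F i j) d (hFd i j).le)).PosSemidef := by
  rcases eq_or_ne (χ (invTheta (Fin n))) 0 with hinf | hfin
  · simp only [character_frac_eq_zero hinf (hFd _ _)]
    exact PosSemidef.zero
  have hpos : 0 < χ (invTheta (Fin n)) := (character_nonneg χ isSumSq_invTheta).lt_of_ne' hfin
  have hform (u h) : 0 ≤ eval (characterPoint χ) (integratedForm ν G u h) := by
    have hdeg := totalDegree_integratedForm_le (ν := ν) hGD u h
    have hval := hχ _ (frac_integratedForm_smul_one_mem_sosCone u h hdeg)
    rw [character_frac_eq hfin hdeg] at hval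
    exact nonneg_of_mul_nonneg_left hval (pow_pos hpos D)
  have hFz := hF (characterPoint χ) fun y =>
    posSemidef_of_integratedForm_nonneg hcar hmom hG hform
  convert hFz.smul (pow_pos hpos d).le using 1
  ext i j
  simp [evalMat, character_frac_eq hfin, mul_comm]

theorem inhomogeneous_positivstellensatz_general [DecidableEq ι] (hmom : momentsFinite ν)
    (hcar : Carleman ν) {F : Matrix ι ι (MvPolynomial (Fin n) ℝ)} (hFs : F.IsSymm)
    (hGs : G.IsSymm) {d : ℕ} (hFd : ∀ i j, (F i j).totalDegree < 2 * d)
    (hGD : matDegX G ≤ 2 * D)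
    (hpsd : ∀ x, (∀ y ∈ ν.support, (evalMat (Sum.elim x y) G).PosSemidef) →
      (evalMat x F).PosSemidef) {ε : ℝ} (hε : 0 < ε) :
    ∃ N, HasSOSRep ν G (2 * (N + d)) (2 * (N + d - D))
      (thetaPoly (Fin n) ^ N • (F + (C ε * thetaPoly (Fin n) ^ d) • 1)) := by
  let M : Matrix ι ι (boundedFractions (Fin n)) := .of fun i j => frac (F i j) d (hFd i j).le
  have hM : M.IsSymm := by ext i j; simp [M, hFs.apply i j]
  obtain ⟨k, hk⟩ := (isQuadraticModule_sosCone (ν := ν) (G := G) (D := D)).add_smul_one_mem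
    mem_sosBounded hM
    (fun χ hχ => posSemidef_map_character hcar hmom hGs hGD hFd hpsd hχ) hε
  obtain ⟨H, hH, hHM⟩ := hk.add_left d
  refine ⟨D + k, ?_⟩
  convert hH using 1
  · ring
  · omega
  ext1 i j
  refine MvPolynomial.funext fun x => ?_
  have hone : ((1 : Matrix ι ι (boundedFractions (Fin n))) i j).1 x =
      eval x ((1 : Matrix ι ι (MvPolynomial (Fin n) ℝ)) i j) := by
    rw [one_apply, one_apply]
    split_ifs <;> simp
  rw [← hHM]
  change _ = (eval x (F i j) / _ + ε * ((1 : Matrix ι ι (boundedFractions (Fin n))) i j).1 x) * _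
  simp only [Matrix.smul_apply, Matrix.add_apply, smul_eq_mul, map_mul, map_pow, map_add, eval_C,
    hone]
  field_simp [eval_thetaPoly_pow_ne_zero x d]
  ring

end Positivstellensatz

/-- inhomogeneous Putinar–Vasilescu-type Positivstellensatz with
universal quantifiers (Corollary of Theorem C). -/
theorem inhomogeneous_positivstellensatz {n m p q : ℕ}
    (Y : Set (Fin m → ℝ)) (hY : IsClosed Y)
    (ν : Measure (Fin m → ℝ)) (hsupp : hasSupport ν Y) (hmom : momentsFinite ν)
    (hcar : Carleman ν)
    (F : Matrix (Fin p) (Fin p) (MvPolynomial (Fin n) ℝ)) (hFs : F.IsSymm)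
    (G : Matrix (Fin q) (Fin q) (MvPolynomial (Fin n ⊕ Fin m) ℝ)) (hGs : G.IsSymm)
    (hpsd : ∀ x : Fin n → ℝ,
      (∀ y ∈ Y, (evalMat (Sum.elim x y) G).PosSemidef) → (evalMat x F).PosSemidef) :
    ∀ ε > (0 : ℝ), ∃ (N : ℕ)
      (S0 : Matrix (Fin p) (Fin p) (MvPolynomial (Fin n) ℝ))
      (Sg : Matrix (Fin p × Fin q) (Fin p × Fin q) (MvPolynomial (Fin n ⊕ Fin m) ℝ)),
      IsSOSMatrix S0 ∧ IsSOSMatrix Sg ∧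
      matDeg S0 ≤ 2 * (N + (Finset.univ.sup fun i => Finset.univ.sup fun j =>
        (F i j).totalDegree / 2 + 1)) ∧
      matDegX Sg ≤ 2 * (N + (Finset.univ.sup fun i => Finset.univ.sup fun j =>
        (F i j).totalDegree / 2 + 1) - (Finset.univ.sup fun a => Finset.univ.sup fun b =>
        degX (G a b) / 2 + 1)) ∧
      (((1 : MvPolynomial (Fin n) ℝ) + ∑ i, X i ^ 2) ^ N) •
          (F + (MvPolynomial.C ε *
            ((1 : MvPolynomial (Fin n) ℝ) + ∑ i, X i ^ 2) ^
              (Finset.univ.sup fun i => Finset.univ.sup fun j =>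
                (F i j).totalDegree / 2 + 1)) •
            (1 : Matrix (Fin p) (Fin p) (MvPolynomial (Fin n) ℝ))) =
        S0 + (lram Sg G).map (integY ν) := by
  intro ε hε
  have hFd (i j : Fin p) : (F i j).totalDegree < 2 * (Finset.univ.sup fun i => Finset.univ.sup
      fun j => (F i j).totalDegree / 2 + 1) := by
    have := (Finset.le_sup (f := fun j => (F i j).totalDegree / 2 + 1) (mem_univ j)).trans
      (Finset.le_sup (f := fun i => Finset.univ.sup fun j => (F i j).totalDegree / 2 + 1)
        (mem_univ i))
    omega
  have hGd : matDegX G ≤ 2 * (Finset.univ.sup fun a => Finset.univ.sup fun b =>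
      degX (G a b) / 2 + 1) := matDegX_le_iff.2 fun a b => by
    have := (Finset.le_sup (f := fun b => degX (G a b) / 2 + 1) (mem_univ b)).trans
      (Finset.le_sup (f := fun a => Finset.univ.sup fun b => degX (G a b) / 2 + 1) (mem_univ a))
    omega
  have hYsupp : Y ⊆ ν.support := fun y hy => (Measure.mem_support_iff_forall y).2 fun U hU => by
    obtain ⟨V, hVU, hV, hyV⟩ := mem_nhds_iff.1 hU
    exact (hsupp.2 V hV ⟨y, hyV, hy⟩).trans_le (measure_mono hVU)
  exact inhomogeneous_positivstellensatz_general hmom hcar hFs hGs hFd hGd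
    (fun x hx => hpsd x fun y hy => hx y (hYsupp hy)) hε
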